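/- arXiv:1602.01678 — 6 statements merged into one kernel-verified Lean document; each statement's English description precedes it below -/
import Mathlib

section
/- (Main Theorem, Sec. 4.) Under the stated hypotheses, the following pointwise identity holds on ℝ⁴: (F + f)(F̄ + f̄) + X̄·(A X) + X·B̄ + B·X̄ = Ȳ·(A Y) + Y·B̄ + B·Ȳ − (f f̄)⁻¹·[Y·(A Y + B)]·[Ȳ·(Ā Ȳ + B̄)]. That is, the Lagrangian ℒ = (F+f)(F̄+f̄) + X̄ A X + X B̄ + B X̄ with the nilpotent constraint X = c/(2F) reduces, after using the equation of motion for F and F̄, to ℒ = Ȳ A Y + Y B̄ + B Ȳ − |Y(AY+B)|²/(f f̄) with Y = −c/(2f). -/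
open scoped BigOperators

/-- Partial derivative of a `Λ`-valued function on `ℝ⁴` in the `i`-th coordinate
direction. -/
noncomputable def pd {Λ : Type*} [NormedAddCommGroup Λ] [NormedSpace ℝ Λ]
    (i : Fin 4) (u : (Fin 4 → ℝ) → Λ) : (Fin 4 → ℝ) → Λ :=
  fun x => fderiv ℝ u x (Pi.single i 1)

/-- The second-order kinetic operator
`A u = e⁻¹ ∂_μ (e g^{μν} ∂_ν u) + i t^μ ∂_μ u + (i/2) e⁻¹ ∂_μ (e t^μ) u + r u`
of eq. (4.2). The conjugate operator `Ā` is `Aop e g (-t) r`. -/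
noncomputable def Aop {Λ : Type*} [NormedCommRing Λ] [NormedAlgebra ℂ Λ]
    (e : (Fin 4 → ℝ) → ℝ) (g : (Fin 4 → ℝ) → Fin 4 → Fin 4 → ℝ)
    (t : (Fin 4 → ℝ) → Fin 4 → ℝ) (r : (Fin 4 → ℝ) → ℝ)
    (u : (Fin 4 → ℝ) → Λ) : (Fin 4 → ℝ) → Λ :=
  fun x =>
    (e x)⁻¹ • (∑ μ : Fin 4, pd μ (fun y => e y • ∑ ν : Fin 4, g y μ ν • pd ν u y) x)
      + Complex.I • (∑ μ : Fin 4, t x μ • pd μ u x)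
      + ((2 : ℝ)⁻¹ * (e x)⁻¹ *
          ∑ μ : Fin 4, fderiv ℝ (fun y => e y * t y μ) x (Pi.single μ 1)) •
          (Complex.I • u x)
      + r x • u x

section helpers

theorem hasFDerivAt_inv_aux {Λ : Type*} [NormedCommRing Λ] [NormedAlgebra ℝ Λ]
    {E : Type*} [NormedAddCommGroup E] [NormedSpace ℝ E] (F G : E → Λ)
    (hFG : ∀ x, F x * G x = 1) (hF : Differentiable ℝ F) (x : E) :
    HasFDerivAt G (-(G x * G x) • fderiv ℝ F x) x := by
  have hcF : ContinuousAt F x := (hF x).continuousAt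
  have hdiff : ∀ y, G y - G x = -(G y * G x * (F y - F x)) := by
    intro y
    linear_combination (G x) * hFG y - (G y) * hFG x
  -- local boundedness
  have hGc : ContinuousAt G x := by
    have h1 : Filter.Tendsto (fun y => ‖G x‖ * ‖F y - F x‖) (nhds x) (nhds 0) := by
      have : Filter.Tendsto (fun y => ‖G x‖ * ‖F y - F x‖) (nhds x)
          (nhds (‖G x‖ * ‖F x - F x‖)) :=
        ((hcF.sub continuousAt_const).norm).const_mul _
      simpa using this
    have hb : ∀ᶠ y in nhds x, ‖G y‖ ≤ 2 * ‖G x‖ := by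
      filter_upwards [h1.eventually (gt_mem_nhds (show (0:ℝ) < 1/2 by norm_num))] with y hy
      have e1 : G y = G x + (G y - G x) := by ring
      have e2 : ‖G y - G x‖ ≤ ‖G y‖ * (‖G x‖ * ‖F y - F x‖) := by
        rw [hdiff, norm_neg, mul_assoc]
        exact (norm_mul_le _ _).trans (by gcongr; exact norm_mul_le _ _)
      have e3 : ‖G y‖ ≤ ‖G x‖ + ‖G y - G x‖ := by
        calc ‖G y‖ = ‖G x + (G y - G x)‖ := by rw [← e1]
          _ ≤ _ := norm_add_le _ _
      nlinarith [norm_nonneg (G y)]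
    rw [ContinuousAt, tendsto_iff_norm_sub_tendsto_zero]
    have h2 : Filter.Tendsto (fun y => 2 * ‖G x‖ * (‖G x‖ * ‖F y - F x‖)) (nhds x) (nhds 0) := by
      simpa using h1.const_mul (2 * ‖G x‖)
    refine squeeze_zero' (Filter.Eventually.of_forall fun y => norm_nonneg _) ?_ h2
    filter_upwards [hb] with y hy
    rw [hdiff, norm_neg, mul_assoc]
    refine (norm_mul_le _ _).trans ?_
    gcongr
    exact norm_mul_le _ _
  have hF' := (hF x).hasFDerivAt
  rw [hasFDerivAt_iff_isLittleO] at hF' ⊢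
  have key : ∀ y, G y - G x - (-(G x * G x) • fderiv ℝ F x) (y - x)
      = -(G y * G x) * (F y - F x - fderiv ℝ F x (y - x))
        + (-(G x) * (G y - G x)) * (fderiv ℝ F x (y - x)) := by
    intro y
    simp only [smul_apply, smul_eq_mul]
    linear_combination hdiff y
  simp_rw [key]
  have t1 : (fun y => -(G y * G x)) =O[nhds x] (fun _ => (1:ℝ)) :=
    ((hGc.mul continuousAt_const).neg).isBigO_one ℝ
  have t2 : (fun y => -(G x) * (G y - G x)) =o[nhds x] (fun _ => (1:ℝ)) := by
    rw [Asymptotics.isLittleO_one_iff]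
    have : Filter.Tendsto (fun y => -(G x) * (G y - G x)) (nhds x)
      (nhds (-(G x) * (G x - G x))) := (continuousAt_const.mul (hGc.sub continuousAt_const))
    simpa using this
  have t3 : (fun y => fderiv ℝ F x (y - x)) =O[nhds x] (fun y => y - x) :=
    (fderiv ℝ F x).isBigO_sub _ _
  have a1 := (t1.mul_isLittleO hF'.norm_right)
  have a2 := (t2.mul_isBigO t3.norm_right)
  simp only [one_mul] at a1 a2
  exact (a1.add a2).of_norm_right

theorem contDiff_inv_aux {Λ : Type*} [NormedCommRing Λ] [NormedAlgebra ℝ Λ]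
    {E : Type*} [NormedAddCommGroup E] [NormedSpace ℝ E] (F G : E → Λ)
    (hFG : ∀ x, F x * G x = 1) (hF : ContDiff ℝ (⊤ : ℕ∞) F) :
    ContDiff ℝ (⊤ : ℕ∞) G := by
  have hd := fun x => hasFDerivAt_inv_aux F G hFG (hF.differentiable (by simp)) x
  have hfd : fderiv ℝ G =
      fun x => (ContinuousLinearMap.mul ℝ Λ (-(G x * G x))).comp (fderiv ℝ F x) := by
    ext1 x; rw [(hd x).fderiv]; ext v; simp
  have hF' : ContDiff ℝ (⊤ : ℕ∞) (fderiv ℝ F) := hF.fderiv_right (by simp)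
  rw [contDiff_infty]
  intro n
  induction n with
  | zero =>
    exact contDiff_zero.2 (continuous_iff_continuousAt.2 fun x => (hd x).continuousAt)
  | succ n ih =>
    push_cast
    rw [contDiff_succ_iff_fderiv]
    refine ⟨fun x => (hd x).differentiableAt, by simp, ?_⟩
    rw [hfd]
    exact ((ContinuousLinearMap.mul ℝ Λ).contDiff.comp (ih.mul ih).neg).clm_comp
      (contDiff_infty.1 hF' n)

variable {Λ : Type*} [NormedCommRing Λ] [NormedAlgebra ℂ Λ]

theorem contDiff_pd (i : Fin 4) (u : (Fin 4 → ℝ) → Λ) (hu : ContDiff ℝ (⊤ : ℕ∞) u) :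
    ContDiff ℝ (⊤ : ℕ∞) (pd i u) := by
  have : ContDiff ℝ (⊤ : ℕ∞) (fderiv ℝ u) := hu.fderiv_right (by simp)
  exact this.clm_apply contDiff_const

theorem pd_add' (i : Fin 4) (u v : (Fin 4 → ℝ) → Λ) (hu : ContDiff ℝ (⊤ : ℕ∞) u)
    (hv : ContDiff ℝ (⊤ : ℕ∞) v) (x) : pd i (fun y => u y + v y) x = pd i u x + pd i v x := by
  unfold pd
  rw [fderiv_fun_add (hu.differentiable (by simp) x) (hv.differentiable (by simp) x)]
  rfl

theorem pd_mul' (i : Fin 4) (u v : (Fin 4 → ℝ) → Λ) (hu : ContDiff ℝ (⊤ : ℕ∞) u)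
    (hv : ContDiff ℝ (⊤ : ℕ∞) v) (x) :
    pd i (fun y => u y * v y) x = u x * pd i v x + v x * pd i u x := by
  unfold pd
  rw [fderiv_fun_mul (hu.differentiable (by simp) x) (hv.differentiable (by simp) x)]
  rfl

theorem contDiff_W (e : (Fin 4 → ℝ) → ℝ) (g : (Fin 4 → ℝ) → Fin 4 → Fin 4 → ℝ)
    (hg : ContDiff ℝ (⊤ : ℕ∞) g) (he : ContDiff ℝ (⊤ : ℕ∞) e)
    (u : (Fin 4 → ℝ) → Λ) (hu : ContDiff ℝ (⊤ : ℕ∞) u) (μ : Fin 4) :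
    ContDiff ℝ (⊤ : ℕ∞) (fun y => e y • ∑ ν : Fin 4, g y μ ν • pd ν u y) := by
  refine he.smul (ContDiff.sum fun ν _ => ?_)
  exact (contDiff_pi.1 (contDiff_pi.1 hg μ) ν).smul (contDiff_pd ν u hu)

theorem contDiff_Aop (e : (Fin 4 → ℝ) → ℝ) (g : (Fin 4 → ℝ) → Fin 4 → Fin 4 → ℝ)
    (t : (Fin 4 → ℝ) → Fin 4 → ℝ) (r : (Fin 4 → ℝ) → ℝ)
    (ht : ContDiff ℝ (⊤ : ℕ∞) t) (hr : ContDiff ℝ (⊤ : ℕ∞) r)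
    (hg : ContDiff ℝ (⊤ : ℕ∞) g) (he : ContDiff ℝ (⊤ : ℕ∞) e) (he0 : ∀ x, e x ≠ 0)
    (u : (Fin 4 → ℝ) → Λ) (hu : ContDiff ℝ (⊤ : ℕ∞) u) :
    ContDiff ℝ (⊤ : ℕ∞) (Aop e g t r u) := by
  have hei : ContDiff ℝ (⊤ : ℕ∞) (fun x => (e x)⁻¹) := he.inv he0
  unfold Aop
  refine ((ContDiff.add ?_ ?_).add ?_).add (hr.smul hu)
  · exact hei.smul (ContDiff.sum fun μ _ => contDiff_pd μ _ (contDiff_W e g hg he u hu μ))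
  · exact (ContDiff.sum fun μ _ => (contDiff_pi.1 ht μ).smul (contDiff_pd μ u hu)).const_smul _
  · have s1 : ContDiff ℝ (⊤ : ℕ∞) (fun x => (2 : ℝ)⁻¹ * (e x)⁻¹ *
        ∑ μ : Fin 4, fderiv ℝ (fun y => e y * t y μ) x (Pi.single μ 1)) := by
      refine (contDiff_const.mul hei).mul (ContDiff.sum fun μ _ => ?_)
      have : ContDiff ℝ (⊤ : ℕ∞) (fderiv ℝ (fun y => e y * t y μ)) :=
        (he.mul (contDiff_pi.1 ht μ)).fderiv_right (by simp)
      exact this.clm_apply contDiff_const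
    have s2 : ContDiff ℝ (⊤ : ℕ∞) (fun x => Complex.I • u x) := hu.const_smul _
    exact s1.smul s2

theorem Aop_add (e : (Fin 4 → ℝ) → ℝ) (g : (Fin 4 → ℝ) → Fin 4 → Fin 4 → ℝ)
    (t : (Fin 4 → ℝ) → Fin 4 → ℝ) (r : (Fin 4 → ℝ) → ℝ)
    (hg : ContDiff ℝ (⊤ : ℕ∞) g) (he : ContDiff ℝ (⊤ : ℕ∞) e)
    (u v : (Fin 4 → ℝ) → Λ) (hu : ContDiff ℝ (⊤ : ℕ∞) u) (hv : ContDiff ℝ (⊤ : ℕ∞) v) (x) :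
    Aop e g t r (fun y => u y + v y) x = Aop e g t r u x + Aop e g t r v x := by
  have h2 : ∀ μ, pd μ (fun y => e y • ∑ ν : Fin 4, g y μ ν • pd ν (fun y => u y + v y) y) x
      = pd μ (fun y => e y • ∑ ν : Fin 4, g y μ ν • pd ν u y) x
       + pd μ (fun y => e y • ∑ ν : Fin 4, g y μ ν • pd ν v y) x := by
    intro μ
    rw [← pd_add' μ _ _ (contDiff_W e g hg he u hu μ) (contDiff_W e g hg he v hv μ)]
    congr 1
    ext1 y
    simp only [pd_add' _ u v hu hv, smul_add, Finset.sum_add_distrib]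
  unfold Aop
  simp only [h2]
  simp only [pd_add' _ u v hu hv, smul_add, Finset.sum_add_distrib]
  abel

theorem nil_pd (c : (Fin 4 → ℝ) → Λ) (hc : ContDiff ℝ (⊤ : ℕ∞) c)
    (hc2 : ∀ x, c x * c x = 0) (i : Fin 4) (x) : c x * pd i c x = 0 := by
  have h := pd_mul' i c c hc hc x
  have h0 : pd i (fun y => c y * c y) x = 0 := by
    simp only [hc2]; simp [pd]
  rw [h0, ← two_smul ℝ] at h
  exact ((smul_eq_zero_iff_right (two_ne_zero)).1 h.symm)

theorem nil_Aop (e : (Fin 4 → ℝ) → ℝ) (g : (Fin 4 → ℝ) → Fin 4 → Fin 4 → ℝ)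
    (t : (Fin 4 → ℝ) → Fin 4 → ℝ) (r : (Fin 4 → ℝ) → ℝ)
    (hg : ContDiff ℝ (⊤ : ℕ∞) g) (he : ContDiff ℝ (⊤ : ℕ∞) e) (he0 : ∀ x, e x ≠ 0)
    (c Q : (Fin 4 → ℝ) → Λ) (hc : ContDiff ℝ (⊤ : ℕ∞) c) (hQ : ContDiff ℝ (⊤ : ℕ∞) Q)
    (hc2 : ∀ x, c x * c x = 0) (x) :
    c x * Aop e g t r (fun y => c y * Q y) x
      = Q x * (-∑ μ : Fin 4, ∑ ν : Fin 4, g x μ ν • (pd μ c x * pd ν c x)) := by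
  have hcQ : ContDiff ℝ (⊤ : ℕ∞) (fun y => c y * Q y) := hc.mul hQ
  have h1 : ∀ i y, c y * pd i (fun y => c y * Q y) y = 0 := by
    intro i y
    rw [pd_mul' i c Q hc hQ]
    linear_combination (pd i Q y) * hc2 y + Q y * nil_pd c hc hc2 i y
  have h2 : ∀ μ, c x * pd μ (fun y => e y • ∑ ν : Fin 4, g y μ ν • pd ν (fun y => c y * Q y) y) x
      = e x • (Q x * (-∑ ν : Fin 4, g x μ ν • (pd μ c x * pd ν c x))) := by
    intro μ
    have hW := contDiff_W e g hg he _ hcQ μ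
    have h3 := pd_mul' μ c _ hc hW x
    have h4 : (fun y => c y * (e y • ∑ ν : Fin 4, g y μ ν • pd ν (fun y => c y * Q y) y))
        = fun _ => 0 := by
      ext1 y
      simp only [mul_smul_comm, Finset.mul_sum, h1, smul_zero, Finset.sum_const_zero]
    rw [h4] at h3
    have h5 : pd μ (fun _ : Fin 4 → ℝ => (0:Λ)) x = 0 := by simp [pd]
    rw [h5] at h3
    rw [eq_neg_of_add_eq_zero_left h3.symm]
    simp only [mul_neg, smul_neg, smul_mul_assoc, Finset.sum_mul, Finset.mul_sum, mul_smul_comm]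
    congr 2
    refine Finset.sum_congr rfl fun ν _ => ?_
    congr 1
    rw [pd_mul' ν c Q hc hQ]
    linear_combination (pd ν Q x) * nil_pd c hc hc2 μ x
  have h6 : c x * (c x * Q x) = 0 := by linear_combination Q x * hc2 x
  unfold Aop
  simp only [mul_add, mul_smul_comm, Finset.mul_sum, h1, h2, h6, smul_zero,
    Finset.sum_const_zero, add_zero, ← Finset.smul_sum]
  rw [smul_smul, inv_mul_cancel₀ (he0 x), one_smul, ← Finset.mul_sum, Finset.sum_neg_distrib]

theorem final_alg {R : Type*} [CommRing R]
    (c cb B Bb f fb F Fb p pb q qb h AX AXb AY AYb AZ K Kb : R)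
    (hp : F * p = 1) (hpb : Fb * pb = 1) (hq : f * q = 1) (hqb : fb * qb = 1)
    (hc2 : c * c = 0) (hcb2 : cb * cb = 0) (hcK : c * K = 0) (hcbK : cb * Kb = 0)
    (h1 : c * AX = h * p * K) (h1b : cb * AXb = h * pb * Kb)
    (h2 : c * AY = -(h * q) * K) (h2b : cb * AYb = -(h * qb) * Kb)
    (h3 : AY = AX + AZ)
    (h4 : cb * AZ = (-(c * h * q * p * (h * pb * pb * (AX + B)))) * Kb)
    (hw : F + f = cb * (h * pb) * pb * (AX + B))
    (hwb : Fb + fb = c * (h * p) * p * (AXb + Bb)) :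
    (F + f) * (Fb + fb) + cb * (h * pb) * AX + c * (h * p) * Bb + B * (cb * (h * pb))
     = cb * (-(h * qb)) * AY + c * (-(h * q)) * Bb + B * (cb * (-(h * qb)))
      - (q * qb) * (c * (-(h * q)) * (AY + B)) * (cb * (-(h * qb)) * (AYb + Bb)) := by
  have s : q + p = q * p * (F + f) := by linear_combination (-q) * hp - p * hq
  have sb : qb + pb = qb * pb * (Fb + fb) := by linear_combination (-qb) * hpb - pb * hqb
  have r1 : cb * q = -(cb * p) := by
    linear_combination cb * s + cb * q * p * hw + q * p * h * pb * pb * (AX + B) * hcb2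
  have r2 : Kb * q = -(Kb * p) := by
    linear_combination Kb * s + Kb * q * p * hw + q * p * h * pb * pb * (AX + B) * hcbK
  have r3 : c * qb = -(c * pb) := by
    linear_combination c * sb + c * qb * pb * hwb + qb * pb * h * p * p * (AXb + Bb) * hc2
  have r4 : K * qb = -(K * pb) := by
    linear_combination K * sb + K * qb * pb * hwb + qb * pb * h * p * p * (AXb + Bb) * hcK
  have E : c * (AX + B) = h * p * K + c * B := by linear_combination h1
  have Eb : cb * (AXb + Bb) = h * pb * Kb + cb * Bb := by linear_combination h1b
  -- product of the equations of motion
  have T1 : (F + f) * (Fb + fb)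
      = h ^ 2 * p ^ 2 * pb ^ 2 * ((h * p * K + c * B) * (h * pb * Kb + cb * Bb)) := by
    rw [hw, hwb, ← E, ← Eb]; ring
  have r1' : ∀ n : ℕ, cb * q ^ n = cb * (-p) ^ n := by
    intro n
    induction n with
    | zero => simp
    | succ n ih => rw [pow_succ, pow_succ]; linear_combination q * ih + (-p)^n * r1
  have r2' : ∀ n : ℕ, Kb * q ^ n = Kb * (-p) ^ n := by
    intro n
    induction n with
    | zero => simp
    | succ n ih => rw [pow_succ, pow_succ]; linear_combination q * ih + (-p)^n * r2
  have r3' : ∀ n : ℕ, c * qb ^ n = c * (-pb) ^ n := by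
    intro n
    induction n with
    | zero => simp
    | succ n ih => rw [pow_succ, pow_succ]; linear_combination qb * ih + (-pb)^n * r3
  have r4' : ∀ n : ℕ, K * qb ^ n = K * (-pb) ^ n := by
    intro n
    induction n with
    | zero => simp
    | succ n ih => rw [pow_succ, pow_succ]; linear_combination qb * ih + (-pb)^n * r4
  have T2 : (q * qb) * (c * (-(h * q)) * (AY + B)) * (cb * (-(h * qb)) * (AYb + Bb))
      = h ^ 2 * p ^ 2 * pb ^ 2 * ((h * p * K + c * B) * (h * pb * Kb + cb * Bb)) := by
    have a : (q * qb) * (c * (-(h * q)) * (AY + B)) * (cb * (-(h * qb)) * (AYb + Bb))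
      = h ^ 4 * (Kb * q ^ 3) * (K * qb ^ 3) - h ^ 3 * (cb * q ^ 3) * (K * qb ^ 2) * Bb
        - h ^ 3 * (Kb * q ^ 2) * (c * qb ^ 3) * B
        + h ^ 2 * (cb * q ^ 2) * (c * qb ^ 2) * B * Bb := by
      have e1 : c * (AY + B) = -(h * q) * K + c * B := by linear_combination h2
      have e2 : cb * (AYb + Bb) = -(h * qb) * Kb + cb * Bb := by linear_combination h2b
      calc _ = h ^ 2 * q ^ 2 * qb ^ 2 * ((c * (AY + B)) * (cb * (AYb + Bb))) := by ring
        _ = _ := by rw [e1, e2]; ring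
    rw [a]
    simp only [r1', r2', r3', r4']
    ring
  have T3 : c * (-(h * q)) - c * (h * p)
      = h ^ 2 * p ^ 2 * pb ^ 2 * cb * (h * p * K + c * B) := by
    linear_combination (-(c * h)) * s - c * h * q * p * hw
      - h ^ 2 * pb ^ 2 * p * c * (AX + B) * r1 + h ^ 2 * p ^ 2 * pb ^ 2 * cb * h1
  have T3b : cb * (-(h * qb)) - cb * (h * pb)
      = h ^ 2 * p ^ 2 * pb ^ 2 * c * (h * pb * Kb + cb * Bb) := by
    linear_combination (-(cb * h)) * sb - cb * h * qb * pb * hwb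
      - h ^ 2 * p ^ 2 * pb * cb * (AXb + Bb) * r3 + h ^ 2 * p ^ 2 * pb ^ 2 * c * h1b
  have T4 : cb * (-(h * qb)) * AZ = h ^ 3 * p ^ 2 * pb ^ 3 * Kb * (h * p * K + c * B) := by
    linear_combination (-(h * qb)) * h4 + h ^ 3 * p * pb ^ 2 * (AX + B) * (Kb * q) * r3
      - h ^ 3 * p * pb ^ 3 * (AX + B) * c * r2 + h ^ 3 * p ^ 2 * pb ^ 3 * Kb * h1
  have T5 : (cb * (-(h * qb)) - cb * (h * pb)) * AX
      = h ^ 3 * p ^ 3 * pb ^ 2 * K * (h * pb * Kb + cb * Bb) := by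
    rw [T3b]
    linear_combination h ^ 2 * p ^ 2 * pb ^ 2 * (h * pb * Kb + cb * Bb) * h1
  rw [T2, h3]
  linear_combination T1 - T4 - T5 - Bb * T3 - B * T3b

end helpers

/-- **Main Theorem (Sec. 4).** The Lagrangian
`ℒ = (F+f)(F̄+f̄) + X̄ A X + X B̄ + B X̄` with the nilpotent constraint `X = χ²/(2F)`
reduces, after using the equations of motion for `F` and `F̄`, to
`ℒ = Ȳ A Y + Y B̄ + B Ȳ − |Y(AY+B)|²/(f f̄)` with `Y = −χ²/(2f)`. -/
theorem nonGaussian_integration_main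
    {Λ : Type*} [NormedCommRing Λ] [NormedAlgebra ℂ Λ]
    (c cb B Bb f fb F Fb : (Fin 4 → ℝ) → Λ)
    (t : (Fin 4 → ℝ) → Fin 4 → ℝ) (r : (Fin 4 → ℝ) → ℝ)
    (g : (Fin 4 → ℝ) → Fin 4 → Fin 4 → ℝ) (e : (Fin 4 → ℝ) → ℝ)
    -- smoothness of all data
    (hc : ContDiff ℝ (⊤ : ℕ∞) c) (hcb : ContDiff ℝ (⊤ : ℕ∞) cb)
    (hB : ContDiff ℝ (⊤ : ℕ∞) B) (hBb : ContDiff ℝ (⊤ : ℕ∞) Bb)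
    (hf : ContDiff ℝ (⊤ : ℕ∞) f) (hfb : ContDiff ℝ (⊤ : ℕ∞) fb)
    (hF : ContDiff ℝ (⊤ : ℕ∞) F) (hFb : ContDiff ℝ (⊤ : ℕ∞) Fb)
    (ht : ContDiff ℝ (⊤ : ℕ∞) t) (hr : ContDiff ℝ (⊤ : ℕ∞) r)
    (hg : ContDiff ℝ (⊤ : ℕ∞) g) (hgsym : ∀ x μ ν, g x μ ν = g x ν μ)
    (he : ContDiff ℝ (⊤ : ℕ∞) e) (he0 : ∀ x, e x ≠ 0)
    -- nilpotency of the fermion bilinears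
    (hc2 : ∀ x, c x * c x = 0) (hcb2 : ∀ x, cb x * cb x = 0)
    -- invertibility
    (hfU : ∀ x, IsUnit (f x)) (hfbU : ∀ x, IsUnit (fb x))
    (hFU : ∀ x, IsUnit (F x)) (hFbU : ∀ x, IsUnit (Fb x))
    -- the constrained scalars X = c/(2F), X̄ = c̄/(2F̄), Y = -c/(2f), Ȳ = -c̄/(2f̄)
    (X Xb Y Yb : (Fin 4 → ℝ) → Λ)
    (hX : ∀ x, X x = (2 : ℝ)⁻¹ • (c x * Ring.inverse (F x)))
    (hXb : ∀ x, Xb x = (2 : ℝ)⁻¹ • (cb x * Ring.inverse (Fb x)))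
    (hY : ∀ x, Y x = -((2 : ℝ)⁻¹ • (c x * Ring.inverse (f x))))
    (hYb : ∀ x, Yb x = -((2 : ℝ)⁻¹ • (cb x * Ring.inverse (fb x))))
    -- the auxiliary-field equations of motion (4.7):
    -- F + f = X̄ F̄⁻¹ (A X + B) and F̄ + f̄ = X F⁻¹ (Ā X̄ + B̄)
    (heom : ∀ x, F x + f x = Xb x * Ring.inverse (Fb x) * (Aop e g t r X x + B x))
    (heomb : ∀ x, Fb x + fb x =
      X x * Ring.inverse (F x) * (Aop e g (fun y μ => -(t y μ)) r Xb x + Bb x))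
    :
    ∀ x, (F x + f x) * (Fb x + fb x)
        + Xb x * Aop e g t r X x + X x * Bb x + B x * Xb x
      = Yb x * Aop e g t r Y x + Y x * Bb x + B x * Yb x
        - Ring.inverse (f x * fb x) *
            (Y x * (Aop e g t r Y x + B x)) *
            (Yb x * (Aop e g (fun y μ => -(t y μ)) r Yb x + Bb x)) := by
  have inv1 : ∀ a : Λ, IsUnit a → a * Ring.inverse a = 1 := fun a ha => Ring.mul_inverse_cancel a ha
  have hp : ContDiff ℝ (⊤ : ℕ∞) (fun x => Ring.inverse (F x)) :=
    contDiff_inv_aux F _ (fun x => inv1 _ (hFU x)) hF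
  have hpb : ContDiff ℝ (⊤ : ℕ∞) (fun x => Ring.inverse (Fb x)) :=
    contDiff_inv_aux Fb _ (fun x => inv1 _ (hFbU x)) hFb
  have hq : ContDiff ℝ (⊤ : ℕ∞) (fun x => Ring.inverse (f x)) :=
    contDiff_inv_aux f _ (fun x => inv1 _ (hfU x)) hf
  have hqb : ContDiff ℝ (⊤ : ℕ∞) (fun x => Ring.inverse (fb x)) :=
    contDiff_inv_aux fb _ (fun x => inv1 _ (hfbU x)) hfb
  obtain ⟨h, hh⟩ : ∃ h : Λ, ∀ a : Λ, (2 : ℝ)⁻¹ • a = h * a :=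
    ⟨(2 : ℝ)⁻¹ • (1 : Λ), fun a => by rw [smul_mul_assoc, one_mul]⟩
  have hX' : X = fun x => c x * (h * Ring.inverse (F x)) := by
    ext1 x; rw [hX, hh]; ring
  have hXb' : Xb = fun x => cb x * (h * Ring.inverse (Fb x)) := by
    ext1 x; rw [hXb, hh]; ring
  have hY' : Y = fun x => c x * (-(h * Ring.inverse (f x))) := by
    ext1 x; rw [hY, hh]; ring
  have hYb' : Yb = fun x => cb x * (-(h * Ring.inverse (fb x))) := by
    ext1 x; rw [hYb, hh]; ring
  have ht' : ContDiff ℝ (⊤ : ℕ∞) (fun y μ => -(t y μ)) := ht.neg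
  have hXs : ContDiff ℝ (⊤ : ℕ∞) X := by
    rw [hX']; exact hc.mul (contDiff_const.mul hp)
  have hAX : ContDiff ℝ (⊤ : ℕ∞) (Aop e g t r X) :=
    contDiff_Aop e g t r ht hr hg he he0 X hXs
  have hQs : ContDiff ℝ (⊤ : ℕ∞) (fun x => -(c x * h * Ring.inverse (f x) * Ring.inverse (F x) *
      (h * Ring.inverse (Fb x) * Ring.inverse (Fb x) * (Aop e g t r X x + B x)))) :=
    ((((hc.mul contDiff_const).mul hq).mul hp).mul
      (((contDiff_const.mul hpb).mul hpb).mul (hAX.add hB))).neg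
  have hYX : Y = fun x => X x + cb x * (-(c x * h * Ring.inverse (f x) * Ring.inverse (F x) *
      (h * Ring.inverse (Fb x) * Ring.inverse (Fb x) * (Aop e g t r X x + B x)))) := by
    ext1 x
    have h1 := heom x
    have h2 := inv1 _ (hFU x)
    have h3 := inv1 _ (hfU x)
    have h4 := congrFun hX' x
    have h5 := congrFun hY' x
    have h6 := congrFun hXb' x
    rw [h6] at h1
    rw [h5, h4]
    linear_combination (-(c x * h * Ring.inverse (f x) * Ring.inverse (F x))) * h1
      + c x * h * Ring.inverse (f x) * h2 + c x * h * Ring.inverse (F x) * h3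
  have hadd := fun x => Aop_add e g t r hg he X _ hXs (hcb.mul hQs) x
  rw [← hYX] at hadd
  intro x
  have n1 := nil_Aop e g t r hg he he0 c (fun x => h * Ring.inverse (F x)) hc (contDiff_const.mul hp) hc2 x
  have n1b := nil_Aop e g (fun y μ => -(t y μ)) r hg he he0 cb (fun x => h * Ring.inverse (Fb x)) hcb (contDiff_const.mul hpb) hcb2 x
  have n2 := nil_Aop e g t r hg he he0 c (fun x => -(h * Ring.inverse (f x))) hc (contDiff_const.mul hq).neg hc2 x
  have n2b := nil_Aop e g (fun y μ => -(t y μ)) r hg he he0 cb (fun x => -(h * Ring.inverse (fb x))) hcb (contDiff_const.mul hqb).neg hcb2 x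
  have n4 := nil_Aop e g t r hg he he0 cb _ hcb hQs hcb2 x
  rw [← hX'] at n1
  rw [← hXb'] at n1b
  rw [← hY'] at n2
  rw [← hYb'] at n2b
  have hK : ∀ d : (Fin 4 → ℝ) → Λ, ContDiff ℝ (⊤ : ℕ∞) d → (∀ x, d x * d x = 0) →
      d x * (-∑ μ : Fin 4, ∑ ν : Fin 4, g x μ ν • (pd μ d x * pd ν d x)) = 0 := by
    intro d hd hd2
    simp only [mul_neg, Finset.mul_sum, mul_smul_comm, ← mul_assoc, nil_pd d hd hd2, zero_mul,
      smul_zero, Finset.sum_const_zero, neg_zero]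
  have hw := heom x
  have hwb := heomb x
  have key := final_alg (c x) (cb x) (B x) (Bb x) (f x) (fb x) (F x) (Fb x) _ _ _ _ h
    _ _ _ _ _ _ _ (inv1 _ (hFU x)) (inv1 _ (hFbU x)) (inv1 _ (hfU x)) (inv1 _ (hfbU x))
    (hc2 x) (hcb2 x) (hK c hc hc2) (hK cb hcb hcb2) n1 n1b n2 n2b (hadd x) n4
    (by rw [hw, congrFun hXb' x]) (by rw [hwb, congrFun hX' x])
  have hinv : Ring.inverse (f x * fb x) = Ring.inverse (f x) * Ring.inverse (fb x) := by
    rw [Ring.mul_inverse_rev, mul_comm]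
  rw [hinv]
  have h4 := congrFun hX' x
  have h5 := congrFun hY' x
  have h6 := congrFun hXb' x
  have h7 := congrFun hYb' x
  rw [← h4, ← h5, ← h6, ← h7] at key
  exact key
end

section
/- (Eqs. (4.11)/(4.13): expansion of X.) Under the stated hypotheses, the following pointwise identity holds on ℝ⁴: X = Y·(1 − 𝒜), where 𝒜 := (f f̄)⁻¹ · Ȳ · (A Y + B). Equivalently, X = −(c/(2f))·(1 − 𝒜), i.e. the constrained scalar X = c/(2F) equals its lowest-order value Y = −c/(2f) corrected by the single nilpotent factor 𝒜 = (χ̄²/(2 f f̄²))·(A(χ²/(2f)) − B). -/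
open scoped BigOperators

theorem inv_cont {Λ : Type*} [NormedCommRing Λ] (F : (Fin 4 → ℝ) → Λ)
    (hF : Continuous F) (hU : ∀ x, IsUnit (F x)) : Continuous (fun x => Ring.inverse (F x)) := by
  have hi : Topology.IsInducing ((↑) : Λ → UniformSpace.Completion Λ) :=
    (UniformSpace.Completion.isUniformInducing_coe Λ).isInducing
  rw [hi.continuous_iff]
  have h : (((↑) : Λ → UniformSpace.Completion Λ) ∘ fun x => Ring.inverse (F x))
      = fun x => Ring.inverse ((F x : Λ) : UniformSpace.Completion Λ) := by
    funext x
    obtain ⟨u, hu⟩ := hU x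
    have h2 : ((u : Λ) : UniformSpace.Completion Λ)
        = ((Units.map (UniformSpace.Completion.coeRingHom (α := Λ)).toMonoidHom u :
          (UniformSpace.Completion Λ)ˣ) : UniformSpace.Completion Λ) := rfl
    simp only [Function.comp, ← hu]
    rw [h2, Ring.inverse_unit, Ring.inverse_unit]
    rfl
  rw [h, continuous_iff_continuousAt]
  intro x
  have hux : IsUnit ((F x : Λ) : UniformSpace.Completion Λ) :=
    (hU x).map (UniformSpace.Completion.coeRingHom (α := Λ))
  obtain ⟨v, hv⟩ := hux
  have h3 := NormedRing.inverse_continuousAt v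
  rw [hv] at h3
  exact ContinuousAt.comp (f := fun x => ((F x : Λ) : UniformSpace.Completion Λ)) h3
    ((UniformSpace.Completion.continuous_coe Λ).comp hF).continuousAt

theorem inv_deriv {Λ : Type*} [NormedCommRing Λ] [NormedAlgebra ℝ Λ] (F : (Fin 4 → ℝ) → Λ)
    (hF : Differentiable ℝ F) (hU : ∀ x, IsUnit (F x)) (x : Fin 4 → ℝ) :
    HasFDerivAt (fun x => Ring.inverse (F x))
      ((ContinuousLinearMap.mul ℝ Λ (-(Ring.inverse (F x) * Ring.inverse (F x)))).comp (fderiv ℝ F x)) x := by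
  have hc := (inv_cont F hF.continuous hU).continuousAt (x := x)
  have hd := (hF x).hasFDerivAt
  set G := fun x => Ring.inverse (F x) with hG
  have hGF : ∀ y, G y * F y = 1 := fun y => Ring.inverse_mul_cancel _ (hU y)
  rw [hasFDerivAt_iff_isLittleO] at hd ⊢
  have h1 : (fun y => (G y - G x) * (fderiv ℝ F x (y - x))) =o[nhds x] fun y => y - x := by
    have a : (fun y => G y - G x) =o[nhds x] (fun _ => (1 : ℝ)) := by
      rw [Asymptotics.isLittleO_one_iff]
      simpa using hc.sub_const (G x)
    have b : (fun y => fderiv ℝ F x (y - x)) =O[nhds x] fun y => y - x :=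
      (fderiv ℝ F x).isBigO_sub _ _
    have := a.mul_isBigO b.norm_right
    simpa using this
  have h2 : (fun y => G y * (F y - F x - fderiv ℝ F x (y - x))) =o[nhds x] fun y => y - x := by
    have a : G =O[nhds x] (fun _ => (1 : ℝ)) := hc.tendsto.isBigO_one ℝ
    have := a.mul_isLittleO hd.norm_right
    simpa using this
  have h4 : (fun y => (-G x) * ((G y - G x) * (fderiv ℝ F x (y - x)) +
      G y * (F y - F x - fderiv ℝ F x (y - x)))) =o[nhds x] fun y => y - x := by
    have a : (fun _ : Fin 4 → ℝ => -G x) =O[nhds x] (fun _ => (1 : ℝ)) :=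
      Asymptotics.isBigO_const_const _ one_ne_zero _
    have := a.mul_isLittleO (h1.add h2).norm_right
    simpa using this
  refine h4.congr_left fun y => ?_
  simp only [ContinuousLinearMap.comp_apply, ContinuousLinearMap.mul_apply']
  change _ = G y - G x - -(G x * G x) * _
  linear_combination (G y) * hGF x - (G x) * (hGF y)
 
theorem inv_smooth {Λ : Type*} [NormedCommRing Λ] [NormedAlgebra ℝ Λ] (F : (Fin 4 → ℝ) → Λ)
    (hF : ContDiff ℝ (⊤ : ℕ∞) F) (hU : ∀ x, IsUnit (F x)) (n : ℕ) :
    ContDiff ℝ n (fun x => Ring.inverse (F x)) := by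
  have hd : Differentiable ℝ F := hF.differentiable (by simp)
  induction n with
  | zero => exact contDiff_zero.2 (inv_cont F hF.continuous hU)
  | succ n ih =>
    push_cast
    rw [contDiff_succ_iff_fderiv]
    refine ⟨fun x => (inv_deriv F hd hU x).differentiableAt, by simp, ?_⟩
    have : fderiv ℝ (fun x => Ring.inverse (F x)) =
        fun x => ((ContinuousLinearMap.mul ℝ Λ (-(Ring.inverse (F x) * Ring.inverse (F x)))).comp (fderiv ℝ F x)) :=
      funext fun x => (inv_deriv F hd hU x).fderiv
    rw [this]
    exact ((ContinuousLinearMap.mul ℝ Λ).contDiff.comp (ih.mul ih).neg).clm_comp (hF.fderiv_right (by exact_mod_cast le_top))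

theorem Aop_nil {Λ : Type*} [NormedCommRing Λ] [NormedAlgebra ℂ Λ]
    (e : (Fin 4 → ℝ) → ℝ) (g : (Fin 4 → ℝ) → Fin 4 → Fin 4 → ℝ)
    (t : (Fin 4 → ℝ) → Fin 4 → ℝ) (r : (Fin 4 → ℝ) → ℝ)
    (he : Differentiable ℝ e) (hg : Differentiable ℝ g)
    (c u : (Fin 4 → ℝ) → Λ) (hc : ContDiff ℝ 2 c) (hu : ContDiff ℝ 2 u)
    (hc2 : ∀ x, c x * c x = 0) (x : Fin 4 → ℝ) :
    c x * Aop e g t r (fun y => c y * u y) x = c x * u x * Aop e g t r c x := by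
  have hcd : Differentiable ℝ c := hc.differentiable (by simp)
  have hud : Differentiable ℝ u := hu.differentiable (by simp)
  have hpm : ∀ (a b : (Fin 4 → ℝ) → Λ) (ν : Fin 4) (y), DifferentiableAt ℝ a y →
      DifferentiableAt ℝ b y → pd ν (fun y => a y * b y) y = a y * pd ν b y + b y * pd ν a y := by
    intro a b ν y ha hb
    simp only [pd]
    rw [fderiv_fun_mul ha hb]
    simp
  have hpa : ∀ (a b : (Fin 4 → ℝ) → Λ) (ν : Fin 4) (y), DifferentiableAt ℝ a y →
      DifferentiableAt ℝ b y → pd ν (fun y => a y + b y) y = pd ν a y + pd ν b y := by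
    intro a b ν y ha hb
    simp only [pd]
    rw [fderiv_fun_add ha hb]
    simp
  have hcp : ∀ ν y, c y * pd ν c y = 0 := by
    intro ν y
    have h := hpm c c ν y (hcd y) (hcd y)
    have h0 : (fun y => c y * c y) = fun _ => (0 : Λ) := funext hc2
    rw [h0] at h
    have h1 : (2 : ℝ) • (c y * pd ν c y) = 0 := by
      rw [two_smul, ← h]; simp [pd]
    exact (smul_eq_zero.1 h1).resolve_left (by norm_num)
  have hpdd : ∀ (a : (Fin 4 → ℝ) → Λ), ContDiff ℝ 2 a → ∀ ν, Differentiable ℝ (pd ν a) := by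
    intro a ha ν
    have : ContDiff ℝ 1 (fderiv ℝ a) := ha.fderiv_right (by norm_num)
    have h := this.differentiable (by simp)
    unfold pd
    fun_prop
  have hgd : ∀ μ ν, Differentiable ℝ (fun y => g y μ ν) := by
    intro μ ν; fun_prop
  have hS : ∀ (a : (Fin 4 → ℝ) → Λ), ContDiff ℝ 2 a → ∀ μ,
      Differentiable ℝ (fun y => e y • ∑ ν : Fin 4, g y μ ν • pd ν a y) := by
    intro a ha μ
    have := hpdd a ha
    have := hgd μ
    fun_prop
  have key : ∀ μ, c x * pd μ (fun y => e y • ∑ ν : Fin 4, g y μ ν • pd ν (fun y => c y * u y) y) x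
      = c x * u x * pd μ (fun y => e y • ∑ ν : Fin 4, g y μ ν • pd ν c y) x := by
    intro μ
    have h : (fun y => e y • ∑ ν : Fin 4, g y μ ν • pd ν (fun y => c y * u y) y)
      = fun y => c y * (e y • ∑ ν : Fin 4, g y μ ν • pd ν u y)
        + u y * (e y • ∑ ν : Fin 4, g y μ ν • pd ν c y) := by
      funext y
      simp only [hpm c u _ y (hcd y) (hud y), mul_smul_comm, Finset.mul_sum, smul_add,
        Finset.sum_add_distrib]
    have hz : c x * (e x • ∑ ν : Fin 4, g x μ ν • pd ν c x) = 0 := by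
      simp only [mul_smul_comm, Finset.mul_sum, hcp, smul_zero, Finset.sum_const_zero]
    have s1 := hS u hu μ
    have s2 := hS c hc μ
    rw [h, hpa _ _ μ x ((hcd x).fun_mul (s1 x)) ((hud x).fun_mul (s2 x)), hpm _ _ μ x (hcd x) (s1 x),
      hpm _ _ μ x (hud x) (s2 x)]
    generalize (e x • ∑ ν : Fin 4, g x μ ν • pd ν u x) = P at *
    generalize (e x • ∑ ν : Fin 4, g x μ ν • pd ν c x) = Q at *
    linear_combination (pd μ (fun y => e y • ∑ ν : Fin 4, g y μ ν • pd ν u y) x) * hc2 x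
      + P * hcp μ x + pd μ u x * hz
  have key1 : ∀ μ, c x * pd μ (fun y => c y * u y) x = 0 := by
    intro μ
    rw [hpm c u _ x (hcd x) (hud x)]
    linear_combination pd μ u x * hc2 x + u x * hcp μ x
  have key2 : ∀ μ, c x * u x * pd μ c x = 0 := by
    intro μ
    linear_combination u x * hcp μ x
  have k3 : c x * (c x * u x) = 0 := by linear_combination u x * hc2 x
  have k4 : c x * u x * c x = 0 := by linear_combination u x * hc2 x
  simp only [Aop, mul_add, mul_smul_comm, Finset.mul_sum, key, key1, key2, k3, k4]

/-- **Eqs. (4.11)/(4.13).** The constrained scalar `X = χ²/(2F)` equals its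
lowest-order value `Y = −χ²/(2f)` corrected by the single nilpotent factor
`𝒜 = (f f̄)⁻¹ Ȳ (A Y + B)`: one has `X = Y (1 − 𝒜)`. -/
theorem X_expansion
    {Λ : Type*} [NormedCommRing Λ] [NormedAlgebra ℂ Λ]
    (c cb B Bb f fb F Fb : (Fin 4 → ℝ) → Λ)
    (t : (Fin 4 → ℝ) → Fin 4 → ℝ) (r : (Fin 4 → ℝ) → ℝ)
    (g : (Fin 4 → ℝ) → Fin 4 → Fin 4 → ℝ) (e : (Fin 4 → ℝ) → ℝ)
    -- smoothness of all data
    (hc : ContDiff ℝ (⊤ : ℕ∞) c) (hcb : ContDiff ℝ (⊤ : ℕ∞) cb)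
    (hB : ContDiff ℝ (⊤ : ℕ∞) B) (hBb : ContDiff ℝ (⊤ : ℕ∞) Bb)
    (hf : ContDiff ℝ (⊤ : ℕ∞) f) (hfb : ContDiff ℝ (⊤ : ℕ∞) fb)
    (hF : ContDiff ℝ (⊤ : ℕ∞) F) (hFb : ContDiff ℝ (⊤ : ℕ∞) Fb)
    (ht : ContDiff ℝ (⊤ : ℕ∞) t) (hr : ContDiff ℝ (⊤ : ℕ∞) r)
    (hg : ContDiff ℝ (⊤ : ℕ∞) g) (hgsym : ∀ x μ ν, g x μ ν = g x ν μ)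
    (he : ContDiff ℝ (⊤ : ℕ∞) e) (he0 : ∀ x, e x ≠ 0)
    -- nilpotency of the fermion bilinears
    (hc2 : ∀ x, c x * c x = 0) (hcb2 : ∀ x, cb x * cb x = 0)
    -- invertibility
    (hfU : ∀ x, IsUnit (f x)) (hfbU : ∀ x, IsUnit (fb x))
    (hFU : ∀ x, IsUnit (F x)) (hFbU : ∀ x, IsUnit (Fb x))
    -- the constrained scalars X = c/(2F), X̄ = c̄/(2F̄), Y = -c/(2f), Ȳ = -c̄/(2f̄)
    (X Xb Y Yb : (Fin 4 → ℝ) → Λ)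
    (hX : ∀ x, X x = (2 : ℝ)⁻¹ • (c x * Ring.inverse (F x)))
    (hXb : ∀ x, Xb x = (2 : ℝ)⁻¹ • (cb x * Ring.inverse (Fb x)))
    (hY : ∀ x, Y x = -((2 : ℝ)⁻¹ • (c x * Ring.inverse (f x))))
    (hYb : ∀ x, Yb x = -((2 : ℝ)⁻¹ • (cb x * Ring.inverse (fb x))))
    -- the auxiliary-field equations of motion (4.7):
    -- F + f = X̄ F̄⁻¹ (A X + B) and F̄ + f̄ = X F⁻¹ (Ā X̄ + B̄)
    (heom : ∀ x, F x + f x = Xb x * Ring.inverse (Fb x) * (Aop e g t r X x + B x))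
    (heomb : ∀ x, Fb x + fb x =
      X x * Ring.inverse (F x) * (Aop e g (fun y μ => -(t y μ)) r Xb x + Bb x))
    :
    ∀ x, X x = Y x *
      (1 - Ring.inverse (f x * fb x) * (Yb x * (Aop e g t r Y x + B x))) := by
  intro x
  have hXe : X = fun y => c y * ((2 : ℝ)⁻¹ • Ring.inverse (F y)) := by
    funext y; rw [hX, mul_smul_comm]
  have hYe : Y = fun y => c y * (-((2 : ℝ)⁻¹ • Ring.inverse (f y))) := by
    funext y; rw [hY, mul_neg, mul_smul_comm]
  have hed : Differentiable ℝ e := he.differentiable (by simp)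
  have hgd : Differentiable ℝ g := hg.differentiable (by simp)
  have hc' : ContDiff ℝ 2 c := contDiff_infty.1 hc 2
  have hF' : ContDiff ℝ 2 (fun y => (2 : ℝ)⁻¹ • Ring.inverse (F y)) :=
    (inv_smooth F hF hFU 2).const_smul _
  have hf' : ContDiff ℝ 2 (fun y => -((2 : ℝ)⁻¹ • Ring.inverse (f y))) :=
    ((inv_smooth f hf hfU 2).const_smul _).neg
  have hAX := Aop_nil e g t r hed hgd c _ hc' hF' hc2 x
  have hAY := Aop_nil e g t r hed hgd c _ hc' hf' hc2 x
  rw [← hXe] at hAX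
  rw [← hYe] at hAY
  have e1 := heom x
  have e2 := heomb x
  have i1 := Ring.inverse_mul_cancel _ (hFU x)
  have i2 := Ring.inverse_mul_cancel _ (hFbU x)
  have i3 := Ring.inverse_mul_cancel _ (hfU x)
  have i4 := Ring.inverse_mul_cancel _ (hfbU x)
  have n1 := hc2 x
  have n2 := hcb2 x
  rw [Ring.mul_inverse_rev]
  have hX' := hX x
  have hXb' := hXb x
  have hY' := hY x
  have hYb' := hYb x
  have hh : (algebraMap ℝ Λ (2 : ℝ)⁻¹) * 2 = 1 := by
    have : (2 : Λ) = algebraMap ℝ Λ 2 := (map_ofNat _ 2).symm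
    rw [this, ← map_mul]; norm_num
  simp only [Algebra.smul_def] at hX' hXb' hY' hYb' hAX hAY
  generalize algebraMap ℝ Λ (2 : ℝ)⁻¹ = h at *
  generalize Ring.inverse (F x) = G at *
  generalize Ring.inverse (Fb x) = Gb at *
  generalize Ring.inverse (f x) = k at *
  generalize Ring.inverse (fb x) = kb at *
  generalize Aop e g t r X x = AX at *
  generalize Aop e g t r Y x = AY at *
  generalize Aop e g t r c x = Ac at *
  generalize Aop e g (fun y μ => -(t y μ)) r Xb x = AXb at *
  rw [hXb'] at e1
  rw [hX'] at e2
  rw [hX', hY', hYb']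
  generalize F x = F at *
  generalize Fb x = Fb at *
  generalize f x = f at *
  generalize fb x = fb at *
  generalize c x = c at *
  generalize cb x = cb at *
  generalize B x = B at *
  generalize Bb x = Bb at *
  -- c̄ F⁻¹ = - c̄ f⁻¹ and its conjugate
  have a1 : cb * (F + f) = 0 := by rw [e1]; linear_combination (h * Gb * Gb * (AX + B)) * n2
  have a2 : c * (Fb + fb) = 0 := by rw [e2]; linear_combination (h * G * G * (AXb + Bb)) * n1
  have b1 : cb * G = - (cb * k) := by
    linear_combination (k * G) * a1 - cb * k * i1 - cb * G * i3
  have b2 : c * Gb = - (c * kb) := by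
    linear_combination (kb * Gb) * a2 - c * kb * i2 - c * Gb * i4
  have d1 : c * cb * AX = c * cb * AY := by
    linear_combination cb * hAX - cb * hAY + (c * h * Ac) * b1
  have d2 : c * (G + k) = c * G * k * (F + f) := by
    linear_combination - c * k * i1 - c * G * i3
  have d3 : c * Gb * Gb = c * kb * kb := by
    linear_combination (Gb - kb) * b2
  rw [e1] at d2
  linear_combination h * d2 + (h * h * G * k * cb * (AX + B)) * d3
    + (h * h * k * c * kb * kb * (AX + B)) * b1 - (h * h * k * k * kb * kb) * d1
end

section
/- (Eqs. (4.12)/(4.14).) Under the stated hypotheses, the following pointwise identity holds on ℝ⁴: (F + f)·(F̄ + f̄) = (f f̄)⁻¹ · Y·Ȳ · (A Y + B) · (Ā Ȳ + B̄) = f f̄ · 𝒜 · 𝒜̄, where 𝒜 := (f f̄)⁻¹ Ȳ (A Y + B) and 𝒜̄ := (f f̄)⁻¹ Y (Ā Ȳ + B̄). That is, in the product (F+f)(F̄+f̄) = (X X̄/(F F̄))·(A X + B)·(Ā X̄ + B̄) obtained from the equations of motion, only the lowest-order values X → Y, F → −f contribute. -/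
open scoped BigOperators

lemma aux_cont {Λ : Type*} [NormedCommRing Λ] {E : Type*} [TopologicalSpace E]
    (F G : E → Λ) (hFG : ∀ x, F x * G x = 1) (hF : Continuous F) : Continuous G := by
  rw [continuous_iff_continuousAt]
  intro x
  have key : ∀ y, G y - G x = -(G y * G x * (F y - F x)) := by
    intro y
    linear_combination G x * hFG y - G y * hFG x
  -- local bound
  have h1 : Filter.Tendsto (fun y => ‖G x‖ * ‖F y - F x‖) (nhds x) (nhds 0) := by
    have : ContinuousAt (fun y => ‖G x‖ * ‖F y - F x‖) x := by fun_prop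
    simpa [ContinuousAt] using this
  have hb : ∀ᶠ y in nhds x, ‖G y‖ ≤ 2 * ‖G x‖ := by
    filter_upwards [h1.eventually (gt_mem_nhds (show (0:ℝ) < 1/2 by norm_num))] with y hy
    have h2 : ‖G y - G x‖ ≤ ‖G y‖ * (‖G x‖ * ‖F y - F x‖) := by
      rw [key, norm_neg, mul_assoc]
      exact (norm_mul_le _ _).trans (by gcongr; exact norm_mul_le _ _)
    have h3 : ‖G y‖ ≤ ‖G y - G x‖ + ‖G x‖ := by
      simpa using norm_add_le (G y - G x) (G x)
    nlinarith [norm_nonneg (G y), norm_nonneg (G x)]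
  rw [ContinuousAt, tendsto_iff_norm_sub_tendsto_zero]
  have h4 : Filter.Tendsto (fun y => 2 * ‖G x‖ * (‖G x‖ * ‖F y - F x‖)) (nhds x) (nhds 0) := by
    simpa using h1.const_mul (2 * ‖G x‖)
  refine squeeze_zero' (Filter.Eventually.of_forall fun _ => norm_nonneg _) ?_ h4
  filter_upwards [hb] with y hy
  rw [key, norm_neg, mul_assoc]
  exact (norm_mul_le _ _).trans (mul_le_mul hy (norm_mul_le _ _) (norm_nonneg _) (by positivity))

lemma aux_deriv {Λ : Type*} [NormedCommRing Λ] [NormedAlgebra ℝ Λ]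
    {E : Type*} [NormedAddCommGroup E] [NormedSpace ℝ E]
    (F G : E → Λ) (hFG : ∀ x, F x * G x = 1) (hF : Differentiable ℝ F) (x : E) :
    HasFDerivAt G ((ContinuousLinearMap.mul ℝ Λ (-(G x * G x))).comp (fderiv ℝ F x)) x := by
  have hG := aux_cont F G hFG hF.continuous
  have hd := (hF x).hasFDerivAt
  rw [hasFDerivAt_iff_isLittleO] at hd ⊢
  have e : (fun y => G y - G x -
      ((ContinuousLinearMap.mul ℝ Λ (-(G x * G x))).comp (fderiv ℝ F x)) (y - x)) =
      fun y => (-(G y * G x)) * (F y - F x - fderiv ℝ F x (y - x)) +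
        ((G x - G y) * G x) * (fderiv ℝ F x (y - x)) := by
    funext y
    simp only [ContinuousLinearMap.comp_apply, ContinuousLinearMap.mul_apply']
    linear_combination G x * hFG y - G y * hFG x
  rw [e]
  have b1 : (fun y => -(G y * G x)) =O[nhds x] (fun _ => (1:ℝ)) := by
    have : ContinuousAt (fun y => -(G y * G x)) x := by fun_prop
    exact this.tendsto.isBigO_one ℝ
  have b2 : (fun y => (G x - G y) * G x) =o[nhds x] (fun _ => (1:ℝ)) := by
    rw [Asymptotics.isLittleO_one_iff]
    have : ContinuousAt (fun y => (G x - G y) * G x) x := by fun_prop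
    simpa [ContinuousAt] using this
  have b3 : (fun y => fderiv ℝ F x (y - x)) =O[nhds x] (fun y => ‖y - x‖) :=
    ((fderiv ℝ F x).isBigO_sub _ _).norm_right
  have r1 := b1.mul_isLittleO hd.norm_right
  have r2 := b2.mul_isBigO b3
  simp only [one_mul] at r1 r2
  exact (r1.add r2).of_norm_right

lemma aux_contDiff {Λ : Type*} [NormedCommRing Λ] [NormedAlgebra ℝ Λ]
    {E : Type*} [NormedAddCommGroup E] [NormedSpace ℝ E]
    (F G : E → Λ) (hFG : ∀ x, F x * G x = 1) (hF : ContDiff ℝ (⊤ : ℕ∞) F) (n : ℕ) :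
    ContDiff ℝ n G := by
  have hFd : Differentiable ℝ F := hF.differentiable (by simp)
  induction n with
  | zero =>
    exact_mod_cast contDiff_zero.2 (aux_cont F G hFG hF.continuous)
  | succ n ih =>
    push_cast
    rw [contDiff_succ_iff_fderiv]
    refine ⟨fun x => (aux_deriv F G hFG hFd x).differentiableAt, by simp, ?_⟩
    have e : fderiv ℝ G = fun x =>
        (ContinuousLinearMap.mul ℝ Λ (-(G x * G x))).comp (fderiv ℝ F x) :=
      funext fun x => (aux_deriv F G hFG hFd x).fderiv
    rw [e]
    have h1 : ContDiff ℝ n (fderiv ℝ F) := hF.fderiv_right (by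
      exact_mod_cast le_top)
    exact ((ContinuousLinearMap.mul ℝ Λ).contDiff.comp (ih.mul ih).neg).clm_comp h1

lemma pd_zero_mul {Λ : Type*} [NormedCommRing Λ] [NormedAlgebra ℝ Λ]
    (p v : (Fin 4 → ℝ) → Λ) (hp : Differentiable ℝ p) (hv : Differentiable ℝ v)
    (h : ∀ x, p x * v x = 0) (i : Fin 4) (x : Fin 4 → ℝ) :
    p x * pd i v x + pd i p x * v x = 0 := by
  have h1 := ((hp x).hasFDerivAt.mul (hv x).hasFDerivAt).fderiv
  have h2 : p * v = fun _ => 0 := funext h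
  rw [h2] at h1
  have h3 := congrArg (fun L => L (Pi.single i 1)) h1
  simp at h3
  unfold pd
  linear_combination -h3

lemma pd_contDiff {Λ : Type*} [NormedCommRing Λ] [NormedAlgebra ℝ Λ]
    (v : (Fin 4 → ℝ) → Λ) (hv : ContDiff ℝ 2 v) (i : Fin 4) : ContDiff ℝ 1 (pd i v) := by
  have : ContDiff ℝ 1 (fderiv ℝ v) := hv.fderiv_right (by norm_num)
  exact this.clm_apply contDiff_const

lemma Aop_sub {Λ : Type*} [NormedCommRing Λ] [NormedAlgebra ℂ Λ]
    (e : (Fin 4 → ℝ) → ℝ) (g : (Fin 4 → ℝ) → Fin 4 → Fin 4 → ℝ)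
    (t : (Fin 4 → ℝ) → Fin 4 → ℝ) (r : (Fin 4 → ℝ) → ℝ)
    (he : ContDiff ℝ (⊤ : ℕ∞) e) (hg : ContDiff ℝ (⊤ : ℕ∞) g)
    (u v : (Fin 4 → ℝ) → Λ) (hu : ContDiff ℝ 2 u) (hv : ContDiff ℝ 2 v) (x : Fin 4 → ℝ) :
    Aop e g t r (fun y => u y - v y) x = Aop e g t r u x - Aop e g t r v x := by
  have hed : Differentiable ℝ e := he.differentiable (by simp)
  have hgd : ∀ μ ν, Differentiable ℝ (fun y => g y μ ν) := fun μ ν =>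
    differentiable_pi.1 (differentiable_pi.1 (hg.differentiable (by simp)) μ) ν
  have pu : ∀ i, Differentiable ℝ (pd i u) := fun i =>
    (pd_contDiff u hu i).differentiable (by simp)
  have pv : ∀ i, Differentiable ℝ (pd i v) := fun i =>
    (pd_contDiff v hv i).differentiable (by simp)
  have hs : ∀ i, pd i (fun y => u y - v y) = fun y => pd i u y - pd i v y := by
    intro i; funext y
    unfold pd
    rw [fderiv_fun_sub (hu.differentiable (by simp) y) (hv.differentiable (by simp) y)]
    rfl
  have hss : ∀ μ, pd μ (fun y => e y • ∑ ν, g y μ ν • (pd ν u y - pd ν v y)) x =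
      pd μ (fun y => e y • ∑ ν, g y μ ν • pd ν u y) x -
      pd μ (fun y => e y • ∑ ν, g y μ ν • pd ν v y) x := by
    intro μ
    have : (fun y => e y • ∑ ν, g y μ ν • (pd ν u y - pd ν v y)) = fun y =>
      (e y • ∑ ν, g y μ ν • pd ν u y) - (e y • ∑ ν, g y μ ν • pd ν v y) := by
      funext y
      simp only [smul_sub, Finset.sum_sub_distrib]
    rw [this]
    unfold pd at *
    rw [fderiv_fun_sub (by fun_prop) (by fun_prop)]
    rfl
  unfold Aop
  simp only [hs]
  simp only [hss]
  simp only [smul_sub, Finset.sum_sub_distrib]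
  abel

lemma Aop_kill {Λ : Type*} [NormedCommRing Λ] [NormedAlgebra ℂ Λ]
    (e : (Fin 4 → ℝ) → ℝ) (g : (Fin 4 → ℝ) → Fin 4 → Fin 4 → ℝ)
    (t : (Fin 4 → ℝ) → Fin 4 → ℝ) (r : (Fin 4 → ℝ) → ℝ)
    (he : ContDiff ℝ (⊤ : ℕ∞) e) (hg : ContDiff ℝ (⊤ : ℕ∞) g)
    (c cb D b : (Fin 4 → ℝ) → Λ)
    (hc : ContDiff ℝ (⊤ : ℕ∞) c) (hcb : ContDiff ℝ (⊤ : ℕ∞) cb)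
    (hc2 : ∀ x, c x * c x = 0) (hcb2 : ∀ x, cb x * cb x = 0)
    (hD : ContDiff ℝ 2 D) (hDb : ∀ x, D x = c x * cb x * b x) (x : Fin 4 → ℝ) :
    c x * cb x * Aop e g t r D x = 0 := by
  have hed : Differentiable ℝ e := he.differentiable (by simp)
  have hgd : ∀ μ ν, Differentiable ℝ (fun y => g y μ ν) := fun μ ν =>
    differentiable_pi.1 (differentiable_pi.1 (hg.differentiable (by simp)) μ) ν
  have pD : ∀ i, Differentiable ℝ (pd i D) := fun i =>
    (pd_contDiff D hD i).differentiable (by simp)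
  have hDd : Differentiable ℝ D := hD.differentiable (by simp)
  have hcd : Differentiable ℝ c := hc.differentiable (by simp)
  have hcbd : Differentiable ℝ cb := hcb.differentiable (by simp)
  have two : ∀ a : Λ, a + a = 0 → a = 0 := by
    intro a h
    rw [← two_smul ℝ] at h
    exact (smul_eq_zero.1 h).resolve_left two_ne_zero
  have half : ∀ p : (Fin 4 → ℝ) → Λ, Differentiable ℝ p → (∀ x, p x * p x = 0) →
      (∀ x, ∃ q, D x = p x * q) → ∀ i y, p y * pd i D y = 0 := by
    intro p hp hp2 hq i y
    have h1 : p y * pd i p y = 0 := two _ (by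
      linear_combination pd_zero_mul p p hp hp hp2 i y)
    have h2 := pd_zero_mul p D hp hDd (fun x => by
      obtain ⟨q, h⟩ := hq x
      rw [h]; linear_combination q * hp2 x) i y
    obtain ⟨q, h⟩ := hq y
    rw [h] at h2
    linear_combination h2 - q * h1
  have k1 := half c hcd hc2 (fun x => ⟨cb x * b x, by rw [hDb]; ring⟩)
  have k2 := half cb hcbd hcb2 (fun x => ⟨c x * b x, by rw [hDb]; ring⟩)
  have k0 : c x * cb x * D x = 0 := by
    rw [hDb]; linear_combination cb x * cb x * b x * hc2 x
  have k3 : ∀ i, c x * cb x * pd i D x = 0 := fun i => by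
    linear_combination cb x * k1 i x
  have k4 : ∀ μ, c x * cb x * pd μ (fun y => e y • ∑ ν, g y μ ν • pd ν D y) x = 0 := by
    intro μ
    have h1 : ∀ y, c y * (e y • ∑ ν, g y μ ν • pd ν D y) = 0 := fun y => by
      simp [Finset.mul_sum, k1]
    have h2 : ∀ y, cb y * (e y • ∑ ν, g y μ ν • pd ν D y) = 0 := fun y => by
      simp [Finset.mul_sum, k2]
    have h3 := pd_zero_mul c _ hcd (by fun_prop) h1 μ x
    linear_combination cb x * h3 - pd μ c x * h2 x
  unfold Aop
  simp only [mul_add, mul_smul_comm, Finset.mul_sum, k0, k3, k4, smul_zero,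
    Finset.sum_const_zero, add_zero]

/-- **Eqs. (4.12)/(4.14).** In the product
`(F+f)(F̄+f̄) = (X X̄/(F F̄)) (A X + B)(Ā X̄ + B̄)` obtained from the equations of
motion, only the lowest-order values `X → Y`, `F → −f` contribute:
`(F+f)(F̄+f̄) = (f f̄)⁻¹ Y Ȳ (A Y + B)(Ā Ȳ + B̄) = f f̄ 𝒜 𝒜̄`. -/
theorem Fplusf_product
    {Λ : Type*} [NormedCommRing Λ] [NormedAlgebra ℂ Λ]
    (c cb B Bb f fb F Fb : (Fin 4 → ℝ) → Λ)
    (t : (Fin 4 → ℝ) → Fin 4 → ℝ) (r : (Fin 4 → ℝ) → ℝ)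
    (g : (Fin 4 → ℝ) → Fin 4 → Fin 4 → ℝ) (e : (Fin 4 → ℝ) → ℝ)
    -- smoothness of all data
    (hc : ContDiff ℝ (⊤ : ℕ∞) c) (hcb : ContDiff ℝ (⊤ : ℕ∞) cb)
    (hB : ContDiff ℝ (⊤ : ℕ∞) B) (hBb : ContDiff ℝ (⊤ : ℕ∞) Bb)
    (hf : ContDiff ℝ (⊤ : ℕ∞) f) (hfb : ContDiff ℝ (⊤ : ℕ∞) fb)
    (hF : ContDiff ℝ (⊤ : ℕ∞) F) (hFb : ContDiff ℝ (⊤ : ℕ∞) Fb)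
    (ht : ContDiff ℝ (⊤ : ℕ∞) t) (hr : ContDiff ℝ (⊤ : ℕ∞) r)
    (hg : ContDiff ℝ (⊤ : ℕ∞) g) (hgsym : ∀ x μ ν, g x μ ν = g x ν μ)
    (he : ContDiff ℝ (⊤ : ℕ∞) e) (he0 : ∀ x, e x ≠ 0)
    -- nilpotency of the fermion bilinears
    (hc2 : ∀ x, c x * c x = 0) (hcb2 : ∀ x, cb x * cb x = 0)
    -- invertibility
    (hfU : ∀ x, IsUnit (f x)) (hfbU : ∀ x, IsUnit (fb x))
    (hFU : ∀ x, IsUnit (F x)) (hFbU : ∀ x, IsUnit (Fb x))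
    -- the constrained scalars X = c/(2F), X̄ = c̄/(2F̄), Y = -c/(2f), Ȳ = -c̄/(2f̄)
    (X Xb Y Yb : (Fin 4 → ℝ) → Λ)
    (hX : ∀ x, X x = (2 : ℝ)⁻¹ • (c x * Ring.inverse (F x)))
    (hXb : ∀ x, Xb x = (2 : ℝ)⁻¹ • (cb x * Ring.inverse (Fb x)))
    (hY : ∀ x, Y x = -((2 : ℝ)⁻¹ • (c x * Ring.inverse (f x))))
    (hYb : ∀ x, Yb x = -((2 : ℝ)⁻¹ • (cb x * Ring.inverse (fb x))))
    -- the auxiliary-field equations of motion (4.7):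
    -- F + f = X̄ F̄⁻¹ (A X + B) and F̄ + f̄ = X F⁻¹ (Ā X̄ + B̄)
    (heom : ∀ x, F x + f x = Xb x * Ring.inverse (Fb x) * (Aop e g t r X x + B x))
    (heomb : ∀ x, Fb x + fb x =
      X x * Ring.inverse (F x) * (Aop e g (fun y μ => -(t y μ)) r Xb x + Bb x))
    :
    ∀ x, (F x + f x) * (Fb x + fb x)
        = Ring.inverse (f x * fb x) * (Y x * Yb x) *
            ((Aop e g t r Y x + B x) *
              (Aop e g (fun y μ => -(t y μ)) r Yb x + Bb x))
      ∧ (F x + f x) * (Fb x + fb x)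
        = f x * fb x *
            (Ring.inverse (f x * fb x) * (Yb x * (Aop e g t r Y x + B x))) *
            (Ring.inverse (f x * fb x) *
              (Y x * (Aop e g (fun y μ => -(t y μ)) r Yb x + Bb x))) := by
  have inv : ∀ {a : Λ}, IsUnit a → a * Ring.inverse a = 1 := fun h => Ring.mul_inverse_cancel _ h
  have cd : ∀ p q : (Fin 4 → ℝ) → Λ, ContDiff ℝ (⊤ : ℕ∞) p → ContDiff ℝ (⊤ : ℕ∞) q →
      (∀ x, IsUnit (q x)) → ContDiff ℝ 2 (fun x => (2 : ℝ)⁻¹ • (p x * Ring.inverse (q x))) := by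
    intro p q hp hq hu
    have h1 : ContDiff ℝ 2 (fun x => Ring.inverse (q x)) := by
      exact_mod_cast aux_contDiff q _ (fun x => inv (hu x)) hq 2
    have h2 : ContDiff ℝ 2 p := by exact_mod_cast contDiff_infty.1 hp 2
    exact (h2.mul h1).const_smul _
  have cX : ContDiff ℝ 2 X := by rw [funext hX]; exact cd c F hc hF hFU
  have cXb : ContDiff ℝ 2 Xb := by rw [funext hXb]; exact cd cb Fb hcb hFb hFbU
  have cY : ContDiff ℝ 2 Y := by rw [funext hY]; exact (cd c f hc hf hfU).neg
  have cYb : ContDiff ℝ 2 Yb := by rw [funext hYb]; exact (cd cb fb hcb hfb hfbU).neg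
  obtain ⟨k, hk⟩ : ∃ k : Λ, ∀ a : Λ, (2 : ℝ)⁻¹ • a = k * a :=
    ⟨(2 : ℝ)⁻¹ • 1, fun a => by simp⟩
  simp only [hk] at hX hXb hY hYb
  intro x
  have K1 : c x * cb x * (Aop e g t r X x - Aop e g t r Y x) = 0 := by
    rw [← Aop_sub e g t r he hg X Y cX cY]
    refine Aop_kill e g t r he hg c cb _ (fun x => k * (k * (Ring.inverse (Fb x) * Ring.inverse (Fb x) *
      (Aop e g t r X x + B x))) * (Ring.inverse (F x) * Ring.inverse (f x))) hc hcb hc2 hcb2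
      (cX.sub cY) (fun x => ?_) x
    have h := heom x
    have i1 := inv (hFU x)
    have i2 := inv (hfU x)
    rw [hXb x] at h
    rw [hX x, hY x]
    linear_combination k * c x * Ring.inverse (F x) * Ring.inverse (f x) * h
      - k * c x * Ring.inverse (f x) * i1 - k * c x * Ring.inverse (F x) * i2
  have K2 : c x * cb x * (Aop e g (fun y μ => -(t y μ)) r Xb x
      - Aop e g (fun y μ => -(t y μ)) r Yb x) = 0 := by
    rw [← Aop_sub e g _ r he hg Xb Yb cXb cYb, mul_comm (c x)]
    refine Aop_kill e g _ r he hg cb c _ (fun x => k * (k * (Ring.inverse (F x) * Ring.inverse (F x) *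
      (Aop e g (fun y μ => -(t y μ)) r Xb x + Bb x))) * (Ring.inverse (Fb x) * Ring.inverse (fb x)))
      hcb hc hcb2 hc2 (cXb.sub cYb) (fun x => ?_) x
    have h := heomb x
    have i1 := inv (hFbU x)
    have i2 := inv (hfbU x)
    rw [hX x] at h
    rw [hXb x, hYb x]
    linear_combination k * cb x * Ring.inverse (Fb x) * Ring.inverse (fb x) * h
      - k * cb x * Ring.inverse (fb x) * i1 - k * cb x * Ring.inverse (Fb x) * i2
  have hinv : Ring.inverse (f x * fb x) = Ring.inverse (f x) * Ring.inverse (fb x) := by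
    rw [Ring.mul_inverse_rev, mul_comm]
  have h1 := heom x
  have h2 := heomb x
  rw [hXb x] at h1
  rw [hX x] at h2
  have i1 := inv (hFU x)
  have i2 := inv (hfU x)
  have i3 := inv (hFbU x)
  have i4 := inv (hfbU x)
  have n1 := hc2 x
  have n2 := hcb2 x
  rw [hinv, hY x, hYb x]
  generalize Aop e g t r X x = P at *
  generalize Aop e g t r Y x = P' at *
  generalize Aop e g (fun y μ => -(t y μ)) r Xb x = Q at *
  generalize Aop e g (fun y μ => -(t y μ)) r Yb x = Q' at *
  generalize Ring.inverse (F x) = FI at *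
  generalize Ring.inverse (f x) = fI at *
  generalize Ring.inverse (Fb x) = FbI at *
  generalize Ring.inverse (fb x) = fbI at *
  have m1 : cb x * FI = -(cb x * fI) := by
    have : cb x * (F x + f x) = 0 := by rw [h1]; linear_combination k * FbI * FbI * (P + B x) * n2
    linear_combination FI * fI * this - cb x * fI * i1 - cb x * FI * i2
  have m2 : c x * FbI = -(c x * fbI) := by
    have : c x * (Fb x + fb x) = 0 := by rw [h2]; linear_combination k * FI * FI * (Q + Bb x) * n1
    linear_combination FbI * fbI * this - c x * fbI * i3 - c x * FbI * i4
  have main : (F x + f x) * (Fb x + fb x) =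
      k * k * (c x * cb x) * (fI * fI * fbI * fbI) * ((P' + B x) * (Q' + Bb x)) := by
    have s1 : c x * cb x * (FI * FI * FbI * FbI) = c x * cb x * (fI * fI * fbI * fbI) := by
      have a1 : cb x * (FI * FI) = cb x * (fI * fI) := by linear_combination (FI - fI) * m1
      have a2 : c x * (FbI * FbI) = c x * (fbI * fbI) := by linear_combination (FbI - fbI) * m2
      linear_combination c x * FbI * FbI * a1 + cb x * fI * fI * a2
    rw [h1, h2]
    linear_combination k * k * (P + B x) * (Q + Bb x) * s1
      + k * k * (fI * fI * fbI * fbI) * ((Q + Bb x) * K1 + (P' + B x) * K2)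
  refine ⟨?_, ?_⟩
  · rw [main]; ring
  · rw [main]
    linear_combination (-(k * k * c x * cb x * fI * fI * fbI * fbI * (P' + B x) * (Q' + Bb x))) * ((fb x * fbI) * i2 + i4)
end

section
/- (Explicit solution for the auxiliary field, eq. (4.22).) Under the stated hypotheses, the auxiliary field is given by the closed-form expression F = −f · [1 + 𝒜 · (1 − 3·𝒜̄ − c·(2 f² f̄)⁻¹·B̄)] pointwise on ℝ⁴, where 𝒜 := (f f̄)⁻¹ Ȳ (A Y + B) and 𝒜̄ := (f f̄)⁻¹ Y (Ā Ȳ + B̄). -/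
open scoped BigOperators

section Helpers

variable {Λ : Type*} [NormedCommRing Λ] [NormedAlgebra ℂ Λ]

lemma aux_inv_cont {F : (Fin 4 → ℝ) → Λ} (hF : Continuous F) (hU : ∀ x, IsUnit (F x)) :
    Continuous fun x => Ring.inverse (F x) := by
  rw [continuous_iff_continuousAt]
  intro x
  set G : (Fin 4 → ℝ) → Λ := fun x => Ring.inverse (F x) with hG
  have hm : ∀ y, F y * G y = 1 := fun y => Ring.mul_inverse_cancel _ (hU y)
  have key : ∀ y, G y - G x = G y * ((F x - F y) * G x) := by
    intro y
    linear_combination (-(G y)) * hm x + G x * hm y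
  have hz : Filter.Tendsto (fun y => ‖(F x - F y) * G x‖) (nhds x) (nhds 0) := by
    have : Continuous fun y => ‖(F x - F y) * G x‖ := by fun_prop
    simpa using this.tendsto x
  have hsmall : ∀ᶠ y in nhds x, ‖(F x - F y) * G x‖ < 1/2 :=
    hz.eventually (gt_mem_nhds (by norm_num))
  unfold ContinuousAt
  rw [tendsto_iff_norm_sub_tendsto_zero]
  have hz2 : Filter.Tendsto (fun y => (2 * ‖G x‖) * ‖(F x - F y) * G x‖) (nhds x) (nhds 0) := by
    simpa using hz.const_mul (2 * ‖G x‖)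
  refine squeeze_zero' (Filter.Eventually.of_forall fun y => norm_nonneg _) ?_ hz2
  filter_upwards [hsmall] with y hy
  have h1 : ‖G y - G x‖ ≤ ‖G y‖ * ‖(F x - F y) * G x‖ := by
    rw [key y]; exact norm_mul_le _ _
  have h2 : ‖G y‖ ≤ ‖G y - G x‖ + ‖G x‖ := by
    simpa using norm_add_le (G y - G x) (G x)
  have h3 : ‖G y‖ ≤ 2 * ‖G x‖ := by
    nlinarith [norm_nonneg (G y), norm_nonneg ((F x - F y) * G x)]
  exact h1.trans (mul_le_mul_of_nonneg_right h3 (norm_nonneg _))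

lemma aux_inv_fderiv {F : (Fin 4 → ℝ) → Λ} (hF : Differentiable ℝ F) (hU : ∀ x, IsUnit (F x))
    (x : Fin 4 → ℝ) :
    HasFDerivAt (fun x => Ring.inverse (F x))
      ((-(Ring.inverse (F x) * Ring.inverse (F x))) • fderiv ℝ F x) x := by
  have hcont := aux_inv_cont hF.continuous hU
  set G : (Fin 4 → ℝ) → Λ := fun x => Ring.inverse (F x) with hG
  have hm : ∀ y, F y * G y = 1 := fun y => Ring.mul_inverse_cancel _ (hU y)
  have h0 : HasFDerivAt (fun y => F y - F x) (fderiv ℝ F x) x :=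
    (hF x).hasFDerivAt.sub_const _
  have h1 : HasFDerivAt (fun y => (-(G x * G x)) * (F y - F x))
      ((-(G x * G x)) • fderiv ℝ F x) x := h0.const_mul _
  have h2 : HasFDerivAt (fun y => ((G y - G x) * G x) * (F y - F x)) 
      (0 : (Fin 4 → ℝ) →L[ℝ] Λ) x := by
    rw [hasFDerivAt_iff_isLittleO]
    have hb : (fun y => F y - F x) =O[nhds x] fun y => y - x := (hF x).isBigO_sub
    have ho : (fun y => (G y - G x) * G x) =o[nhds x] fun _ => (1 : ℝ) := by
      rw [Asymptotics.isLittleO_one_iff]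
      have : Continuous fun y => (G y - G x) * G x := by fun_prop
      simpa using this.tendsto x
    have := ho.mul_isBigO hb.norm_right
    have h3 : (fun y => ((G y - G x) * G x) * (F y - F x)) =o[nhds x] fun y => ‖y - x‖ := by
      simpa using this
    simpa using h3.norm_right
  have h3 := ((h1.sub h2).add_const (G x))
  have e1 : (fun y => (-(G x * G x)) * (F y - F x) - ((G y - G x) * G x) * (F y - F x) + G x)
      = G := by
    funext y
    linear_combination (-(G x)) * hm y + (G y) * hm x
  rw [sub_zero] at h3
  exact h3.congr_of_eventuallyEq (Filter.Eventually.of_forall fun y => (congrFun e1 y).symm)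

lemma aux_inv_smooth {F : (Fin 4 → ℝ) → Λ} (hF : ContDiff ℝ (⊤ : ℕ∞) F)
    (hU : ∀ x, IsUnit (F x)) : ContDiff ℝ (⊤ : ℕ∞) (fun x => Ring.inverse (F x)) := by
  have hd : Differentiable ℝ F := hF.differentiable (by simp)
  rw [contDiff_infty]
  intro n
  induction n with
  | zero => exact contDiff_zero.2 (aux_inv_cont hd.continuous hU)
  | succ n ih =>
    push_cast
    rw [contDiff_succ_iff_fderiv]
    refine ⟨fun x => (aux_inv_fderiv hd hU x).differentiableAt, by simp, ?_⟩
    have : fderiv ℝ (fun x => Ring.inverse (F x)) =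
        fun x => (-(Ring.inverse (F x) * Ring.inverse (F x))) • fderiv ℝ F x :=
      funext fun x => (aux_inv_fderiv hd hU x).fderiv
    rw [this]
    have h2 : ContDiff ℝ n (fderiv ℝ F) := hF.fderiv_right (by exact_mod_cast le_top)
    have h3 : ContDiff ℝ n (fun x => ContinuousLinearMap.mul ℝ Λ
        (-(Ring.inverse (F x) * Ring.inverse (F x)))) :=
      (ContinuousLinearMap.mul ℝ Λ).contDiff.comp (ih.mul ih).neg
    have h4 := h3.clm_comp h2
    convert h4 using 2
    ext v
    simp

lemma aux_pd_smooth {u : (Fin 4 → ℝ) → Λ} (hu : ContDiff ℝ (⊤ : ℕ∞) u) (i : Fin 4) :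
    ContDiff ℝ (⊤ : ℕ∞) (pd i u) := by
  unfold pd
  exact (hu.fderiv_right (m := (⊤ : ℕ∞)) (by simp)).clm_apply contDiff_const

lemma aux_pd_mul {u v : (Fin 4 → ℝ) → Λ} (hu : ContDiff ℝ (⊤ : ℕ∞) u)
    (hv : ContDiff ℝ (⊤ : ℕ∞) v) (i : Fin 4) (x) :
    pd i (fun y => u y * v y) x = pd i u x * v x + u x * pd i v x := by
  unfold pd
  rw [fderiv_fun_mul (hu.differentiable (by simp) x) (hv.differentiable (by simp) x)]
  simp
  ring

lemma aux_pd_add {u v : (Fin 4 → ℝ) → Λ} (hu : ContDiff ℝ (⊤ : ℕ∞) u)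
    (hv : ContDiff ℝ (⊤ : ℕ∞) v) (i : Fin 4) (x) :
    pd i (fun y => u y + v y) x = pd i u x + pd i v x := by
  unfold pd
  rw [fderiv_fun_add (hu.differentiable (by simp) x) (hv.differentiable (by simp) x)]
  simp

lemma aux_smul {a : (Fin 4 → ℝ) → ℝ} {u : (Fin 4 → ℝ) → Λ} (ha : ContDiff ℝ (⊤ : ℕ∞) a)
    (hu : ContDiff ℝ (⊤ : ℕ∞) u) : ContDiff ℝ (⊤ : ℕ∞) (fun x => a x • u x) :=
  ha.smul hu

lemma aux_flux_smooth {e : (Fin 4 → ℝ) → ℝ} {g : (Fin 4 → ℝ) → Fin 4 → Fin 4 → ℝ}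
    (he : ContDiff ℝ (⊤ : ℕ∞) e) (hg : ContDiff ℝ (⊤ : ℕ∞) g)
    {u : (Fin 4 → ℝ) → Λ} (hu : ContDiff ℝ (⊤ : ℕ∞) u) (μ : Fin 4) :
    ContDiff ℝ (⊤ : ℕ∞) (fun y => e y • ∑ ν : Fin 4, g y μ ν • pd ν u y) := by
  refine aux_smul he (ContDiff.sum fun ν _ => aux_smul ?_ (aux_pd_smooth hu ν))
  exact contDiff_pi.1 (contDiff_pi.1 hg μ) ν

lemma aux_A_smooth {e : (Fin 4 → ℝ) → ℝ} {g : (Fin 4 → ℝ) → Fin 4 → Fin 4 → ℝ}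
    {t : (Fin 4 → ℝ) → Fin 4 → ℝ} {r : (Fin 4 → ℝ) → ℝ}
    (he : ContDiff ℝ (⊤ : ℕ∞) e) (he0 : ∀ x, e x ≠ 0) (hg : ContDiff ℝ (⊤ : ℕ∞) g)
    (ht : ContDiff ℝ (⊤ : ℕ∞) t) (hr : ContDiff ℝ (⊤ : ℕ∞) r)
    {u : (Fin 4 → ℝ) → Λ} (hu : ContDiff ℝ (⊤ : ℕ∞) u) :
    ContDiff ℝ (⊤ : ℕ∞) (Aop e g t r u) := by
  have hei : ContDiff ℝ (⊤ : ℕ∞) (fun x => (e x)⁻¹) := he.inv he0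
  have htμ := fun μ => contDiff_pi.1 ht μ
  unfold Aop
  refine ContDiff.add (ContDiff.add (ContDiff.add ?_ ?_) ?_) ?_
  · exact hei.smul (ContDiff.sum fun μ _ => aux_pd_smooth (aux_flux_smooth he hg hu μ) μ)
  · exact (ContDiff.sum fun μ _ => (htμ μ).smul (aux_pd_smooth hu μ)).const_smul Complex.I
  · refine aux_smul ((contDiff_const.mul hei).mul (ContDiff.sum fun μ _ => ?_))
      (hu.const_smul Complex.I)
    exact ((he.mul (htμ μ)).fderiv_right (m := (⊤ : ℕ∞)) (by simp)).clm_apply contDiff_const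
  · exact hr.smul hu

lemma aux_A_add {e : (Fin 4 → ℝ) → ℝ} {g : (Fin 4 → ℝ) → Fin 4 → Fin 4 → ℝ}
    {t : (Fin 4 → ℝ) → Fin 4 → ℝ} {r : (Fin 4 → ℝ) → ℝ}
    (he : ContDiff ℝ (⊤ : ℕ∞) e) (hg : ContDiff ℝ (⊤ : ℕ∞) g)
    {u v : (Fin 4 → ℝ) → Λ} (hu : ContDiff ℝ (⊤ : ℕ∞) u) (hv : ContDiff ℝ (⊤ : ℕ∞) v) (x) :
    Aop e g t r (fun y => u y + v y) x = Aop e g t r u x + Aop e g t r v x := by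
  have h1 : ∀ μ, (fun y => e y • ∑ ν : Fin 4, g y μ ν • pd ν (fun y => u y + v y) y)
     = fun y => (e y • ∑ ν : Fin 4, g y μ ν • pd ν u y) + (e y • ∑ ν : Fin 4, g y μ ν • pd ν v y) := by
    intro μ; funext y
    simp only [aux_pd_add hu hv, smul_add, Finset.sum_add_distrib]
  unfold Aop
  simp only [h1, aux_pd_add hu hv, smul_add, Finset.sum_add_distrib,
    aux_pd_add (aux_flux_smooth he hg hu _) (aux_flux_smooth he hg hv _)]
  abel

/-- the leading part -/
noncomputable def auxLap (e : (Fin 4 → ℝ) → ℝ) (g : (Fin 4 → ℝ) → Fin 4 → Fin 4 → ℝ)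
    (u : (Fin 4 → ℝ) → Λ) : (Fin 4 → ℝ) → Λ := fun x =>
  (e x)⁻¹ • (∑ μ : Fin 4, pd μ (fun y => e y • ∑ ν : Fin 4, g y μ ν • pd ν u y) x)

lemma aux_nil_pd {c : (Fin 4 → ℝ) → Λ} (hc : ContDiff ℝ (⊤ : ℕ∞) c)
    (hc2 : ∀ x, c x * c x = 0) (i : Fin 4) (x) : c x * pd i c x = 0 := by
  have h := aux_pd_mul hc hc i x
  have h0 : pd i (fun y => c y * c y) x = 0 := by
    unfold pd; simp [hc2]
  rw [h0] at h
  have h2 : (2 : ℝ) • (c x * pd i c x) = 0 := by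
    rw [two_smul]; linear_combination -h
  exact (smul_eq_zero.1 h2).resolve_left (by norm_num)

lemma aux_A_nil {e : (Fin 4 → ℝ) → ℝ} {g : (Fin 4 → ℝ) → Fin 4 → Fin 4 → ℝ}
    (t : (Fin 4 → ℝ) → Fin 4 → ℝ) (r : (Fin 4 → ℝ) → ℝ)
    (he : ContDiff ℝ (⊤ : ℕ∞) e) (hg : ContDiff ℝ (⊤ : ℕ∞) g)
    {c w : (Fin 4 → ℝ) → Λ} (hc : ContDiff ℝ (⊤ : ℕ∞) c) (hw : ContDiff ℝ (⊤ : ℕ∞) w)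
    (hc2 : ∀ x, c x * c x = 0) (x) :
    c x * Aop e g t r (fun y => c y * w y) x = c x * w x * auxLap e g c x := by
  have h1 : ∀ μ, (fun y => e y • ∑ ν : Fin 4, g y μ ν • pd ν (fun y => c y * w y) y)
     = fun y => (e y • ∑ ν : Fin 4, g y μ ν • pd ν c y) * w y
        + c y * (e y • ∑ ν : Fin 4, g y μ ν • pd ν w y) := by
    intro μ; funext y
    simp only [aux_pd_mul hc hw, smul_add, Finset.sum_add_distrib, smul_mul_assoc,
      mul_smul_comm, Finset.sum_mul, Finset.mul_sum]
  have hV : ∀ μ, c x * (e x • ∑ ν : Fin 4, g x μ ν • pd ν c x) = 0 := by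
    intro μ
    simp only [mul_smul_comm, Finset.mul_sum, aux_nil_pd hc hc2, smul_zero, Finset.sum_const_zero]
  have h2 : ∀ μ, c x * pd μ (fun y => e y • ∑ ν : Fin 4, g y μ ν • pd ν (fun y => c y * w y) y) x
      = c x * w x * pd μ (fun y => e y • ∑ ν : Fin 4, g y μ ν • pd ν c y) x := by
    intro μ
    have s1 := aux_flux_smooth he hg hc μ
    have s2 := aux_flux_smooth he hg hw μ
    rw [h1, aux_pd_add (s1.mul hw) (hc.mul s2), aux_pd_mul s1 hw, aux_pd_mul hc s2]
    linear_combination (pd μ w x) * hV μ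
      + (e x • ∑ ν : Fin 4, g x μ ν • pd ν w x) * aux_nil_pd hc hc2 μ x
      + pd μ (fun y => e y • ∑ ν : Fin 4, g y μ ν • pd ν w y) x * hc2 x
  have h3 : ∀ μ, c x * pd μ (fun y => c y * w y) x = 0 := by
    intro μ
    rw [aux_pd_mul hc hw]
    linear_combination w x * aux_nil_pd hc hc2 μ x + pd μ w x * hc2 x
  have h4 : c x * (c x * w x) = 0 := by linear_combination w x * hc2 x
  unfold Aop auxLap
  simp only [mul_add, mul_smul_comm, Finset.mul_sum, h2, h3, h4, smul_zero,
    Finset.sum_const_zero, add_zero]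

lemma aux_alg {R : Type*} [CommRing R]
    (h c cb f fb F Fb i j I J B Bb a a' ab ab' S Sb X Xb Y Yb : R)
    (hh : 2 * h = 1) (hc : c * c = 0) (hcb : cb * cb = 0)
    (hi : f * i = 1) (hj : fb * j = 1) (hI : F * I = 1) (hJ : Fb * J = 1)
    (hX : X = h * (c * I)) (hXb : Xb = h * (cb * J))
    (hY : Y = -(h * (c * i))) (hYb : Yb = -(h * (cb * j)))
    (e1 : F + f = Xb * J * (a + B)) (e2 : Fb + fb = X * I * (ab + Bb))
    (s1 : c * a = c * (h * I) * S) (s2 : c * a' = c * (-(h * i)) * S)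
    (s3 : cb * ab = cb * (h * J) * Sb) (s4 : cb * ab' = cb * (-(h * j)) * Sb)
    (k : cb * a = cb * a' + cb * (c * (h * I * i * h * J * J * (a + B))) * Sb) :
    F = -f * (1 + i * j * (Yb * (a' + B)) * (1 - 3 * (i * j * (Y * (ab' + Bb)))
      - h * (c * (i * i * j) * Bb))) := by
  subst hX hXb hY hYb
  have p1 : cb * I = -(cb * i) := by
    linear_combination (-(cb * I)) * hi + (-(cb * i)) * hI + I * i * cb * e1
      + I * i * h * J * J * (a + B) * hcb
  have p2 : c * J = -(c * j) := by
    linear_combination (-(c * J)) * hj + (-(c * j)) * hJ + J * j * c * e2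
      + J * j * h * I * I * (ab + Bb) * hc
  have q1 : cb * c * a = cb * c * a' := by
    linear_combination cb * s1 - cb * s2 + c * h * S * p1
  have q2 : cb * c * ab = cb * c * ab' := by
    linear_combination c * s3 - c * s4 + cb * h * Sb * p2
  have hJ' : J = j * J * (h * (c * I) * I * (ab + Bb)) - j := by
    linear_combination (-J) * hj - j * hJ + j * J * e2
  have p3 : cb * I * I = cb * i * i := by linear_combination (I - i) * p1
  have p4 : c * J * J = c * j * j := by linear_combination (J - j) * p2
  have q3 : cb * J = -(cb * j * (1 + j * (h * c * i * i * (ab' + Bb)))) := by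
    linear_combination cb * hJ' + j * J * h * c * (ab + Bb) * p3 
      + j * J * h * i * i * q2 + j * h * i * i * cb * (ab' + Bb) * p2
  have q4 : cb * J * J = cb * j * j * (1 + 2 * j * (h * c * i * i * (ab' + Bb))) := by
    linear_combination (J - j * (1 + j * (h * c * i * i * (ab' + Bb)))) * q3
      + cb * j * j * (j * h * i * i * (ab' + Bb))^2 * hc
  have q5 : cb * c * (h * I * i * h * J * J * (a + B)) * Sb
      = cb * c * h * i * i * j * ab' * (a' + B) := by
    linear_combination h * i * h * Sb * J * J * c * (a + B) * p1 
      - h * i * i * h * Sb * cb * (a + B) * p4 - h * i * i * h * Sb * j * j * q1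
      - c * h * i * i * j * (a' + B) * s4
  have k' : cb * (a + B) = cb * (a' + B) * (1 + c * h * i * i * j * ab') := by
    linear_combination k + q5
  have e1' : F + f = h * (cb * j * j) * (a' + B)
      * (1 + h * c * i * i * j * (3 * ab' + 2 * Bb)) := by
    linear_combination e1 + h * (a + B) * q4
      + h * j * j * (1 + 2 * j * (h * c * i * i * (ab' + Bb))) * k'
      + h * cb * j * j * (a' + B) * 2 * j * h * i * i * (ab' + Bb) * h * i * i * j * ab' * hc
  linear_combination e1' - h * (a' + B) * cb * j * j * hi
      - h * (a' + B) * cb * j * j * h * c * i * i * j * (3 * ab' + 2 * Bb) * hi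

end Helpers

/-- **Eq. (4.22).** Explicit closed-form solution for the auxiliary field:
`F = −f [1 + 𝒜 (1 − 3 𝒜̄ − χ² (2 f² f̄)⁻¹ B̄)]`, where
`𝒜 = (f f̄)⁻¹ Ȳ (A Y + B)` and `𝒜̄ = (f f̄)⁻¹ Y (Ā Ȳ + B̄)`. -/
theorem auxiliary_field_solution
    {Λ : Type*} [NormedCommRing Λ] [NormedAlgebra ℂ Λ]
    (c cb B Bb f fb F Fb : (Fin 4 → ℝ) → Λ)
    (t : (Fin 4 → ℝ) → Fin 4 → ℝ) (r : (Fin 4 → ℝ) → ℝ)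
    (g : (Fin 4 → ℝ) → Fin 4 → Fin 4 → ℝ) (e : (Fin 4 → ℝ) → ℝ)
    -- smoothness of all data
    (hc : ContDiff ℝ (⊤ : ℕ∞) c) (hcb : ContDiff ℝ (⊤ : ℕ∞) cb)
    (hB : ContDiff ℝ (⊤ : ℕ∞) B) (hBb : ContDiff ℝ (⊤ : ℕ∞) Bb)
    (hf : ContDiff ℝ (⊤ : ℕ∞) f) (hfb : ContDiff ℝ (⊤ : ℕ∞) fb)
    (hF : ContDiff ℝ (⊤ : ℕ∞) F) (hFb : ContDiff ℝ (⊤ : ℕ∞) Fb)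
    (ht : ContDiff ℝ (⊤ : ℕ∞) t) (hr : ContDiff ℝ (⊤ : ℕ∞) r)
    (hg : ContDiff ℝ (⊤ : ℕ∞) g) (hgsym : ∀ x μ ν, g x μ ν = g x ν μ)
    (he : ContDiff ℝ (⊤ : ℕ∞) e) (he0 : ∀ x, e x ≠ 0)
    -- nilpotency of the fermion bilinears
    (hc2 : ∀ x, c x * c x = 0) (hcb2 : ∀ x, cb x * cb x = 0)
    -- invertibility
    (hfU : ∀ x, IsUnit (f x)) (hfbU : ∀ x, IsUnit (fb x))
    (hFU : ∀ x, IsUnit (F x)) (hFbU : ∀ x, IsUnit (Fb x))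
    -- the constrained scalars X = c/(2F), X̄ = c̄/(2F̄), Y = -c/(2f), Ȳ = -c̄/(2f̄)
    (X Xb Y Yb : (Fin 4 → ℝ) → Λ)
    (hX : ∀ x, X x = (2 : ℝ)⁻¹ • (c x * Ring.inverse (F x)))
    (hXb : ∀ x, Xb x = (2 : ℝ)⁻¹ • (cb x * Ring.inverse (Fb x)))
    (hY : ∀ x, Y x = -((2 : ℝ)⁻¹ • (c x * Ring.inverse (f x))))
    (hYb : ∀ x, Yb x = -((2 : ℝ)⁻¹ • (cb x * Ring.inverse (fb x))))
    -- the auxiliary-field equations of motion (4.7):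
    -- F + f = X̄ F̄⁻¹ (A X + B) and F̄ + f̄ = X F⁻¹ (Ā X̄ + B̄)
    (heom : ∀ x, F x + f x = Xb x * Ring.inverse (Fb x) * (Aop e g t r X x + B x))
    (heomb : ∀ x, Fb x + fb x =
      X x * Ring.inverse (F x) * (Aop e g (fun y μ => -(t y μ)) r Xb x + Bb x))
    :
    ∀ x, F x = -(f x) *
      (1 + Ring.inverse (f x * fb x) * (Yb x * (Aop e g t r Y x + B x)) *
        (1 - 3 * (Ring.inverse (f x * fb x) *
              (Y x * (Aop e g (fun y μ => -(t y μ)) r Yb x + Bb x)))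
          - (2 : ℝ)⁻¹ • (c x * Ring.inverse (f x ^ 2 * fb x) * Bb x))) := by
  have hiF := aux_inv_smooth hF hFU
  have hiFb := aux_inv_smooth hFb hFbU
  have hif := aux_inv_smooth hf hfU
  have hifb := aux_inv_smooth hfb hfbU
  set h : Λ := algebraMap ℝ Λ (2 : ℝ)⁻¹ with hh
  have hh2 : 2 * h = 1 := by
    have : (2 : Λ) = algebraMap ℝ Λ 2 := (map_ofNat _ 2).symm
    rw [this, hh, ← map_mul]; norm_num
  have hX' : X = fun y => c y * (h * Ring.inverse (F y)) := by
    funext y; rw [hX, Algebra.smul_def]; ring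
  have hXb' : Xb = fun y => cb y * (h * Ring.inverse (Fb y)) := by
    funext y; rw [hXb, Algebra.smul_def]; ring
  have hY' : Y = fun y => c y * (-(h * Ring.inverse (f y))) := by
    funext y; rw [hY, Algebra.smul_def]; ring
  have hYb' : Yb = fun y => cb y * (-(h * Ring.inverse (fb y))) := by
    funext y; rw [hYb, Algebra.smul_def]; ring
  have w1 : ContDiff ℝ (⊤ : ℕ∞) (fun y => h * Ring.inverse (F y)) := contDiff_const.mul hiF
  have w2 : ContDiff ℝ (⊤ : ℕ∞) (fun y => h * Ring.inverse (Fb y)) := contDiff_const.mul hiFb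
  have w3 : ContDiff ℝ (⊤ : ℕ∞) (fun y => -(h * Ring.inverse (f y))) :=
    (contDiff_const.mul hif).neg
  have w4 : ContDiff ℝ (⊤ : ℕ∞) (fun y => -(h * Ring.inverse (fb y))) :=
    (contDiff_const.mul hifb).neg
  have sX : ContDiff ℝ (⊤ : ℕ∞) X := by rw [hX']; exact hc.mul w1
  have sY : ContDiff ℝ (⊤ : ℕ∞) Y := by rw [hY']; exact hc.mul w3
  have sA := aux_A_smooth he he0 hg ht hr sX
  set V : (Fin 4 → ℝ) → Λ := fun y => c y * (h * Ring.inverse (F y) * Ring.inverse (f y) * h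
    * Ring.inverse (Fb y) * Ring.inverse (Fb y) * (Aop e g t r X y + B y)) with hV
  have sV : ContDiff ℝ (⊤ : ℕ∞) V :=
    hc.mul ((((((contDiff_const.mul hiF).mul hif).mul contDiff_const).mul hiFb).mul hiFb).mul
      (sA.add hB))
  have hi := fun y => Ring.mul_inverse_cancel _ (hfU y)
  have hI := fun y => Ring.mul_inverse_cancel _ (hFU y)
  have hXY : X = fun y => Y y + cb y * V y := by
    funext y
    have e1 := heom y
    rw [hXb'] at e1
    rw [hV, hY']
    simp only at e1 ⊢
    rw [congrFun hX' y]
    linear_combination (h * c y * Ring.inverse (F y) * Ring.inverse (f y)) * e1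
      - h * c y * Ring.inverse (f y) * hI y - h * c y * Ring.inverse (F y) * hi y
  intro x
  have k := aux_A_add (t := t) (r := r) he hg sY (hcb.mul sV) x
  rw [← hXY] at k
  have k2 := aux_A_nil t r he hg hcb sV hcb2 x
  have s1 := aux_A_nil t r he hg hc w1 hc2 x
  have s2 := aux_A_nil t r he hg hc w3 hc2 x
  have s3 := aux_A_nil (fun y μ => -(t y μ)) r he hg hcb w2 hcb2 x
  have s4 := aux_A_nil (fun y μ => -(t y μ)) r he hg hcb w4 hcb2 x
  rw [← hX'] at s1
  rw [← hY'] at s2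
  rw [← hXb'] at s3
  rw [← hYb'] at s4
  have i1 : Ring.inverse (f x * fb x) = Ring.inverse (f x) * Ring.inverse (fb x) := by
    rw [Ring.mul_inverse_rev, mul_comm]
  have i2 : Ring.inverse (f x ^ 2 * fb x)
      = Ring.inverse (f x) * Ring.inverse (f x) * Ring.inverse (fb x) := by
    rw [pow_two, Ring.mul_inverse_rev, Ring.mul_inverse_rev, mul_comm]
  rw [i1, i2, Algebra.smul_def]
  refine aux_alg h (c x) (cb x) (f x) (fb x) (F x) (Fb x) _ _ (Ring.inverse (F x))
    (Ring.inverse (Fb x)) (B x) (Bb x) (Aop e g t r X x) _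
    (Aop e g (fun y μ => -(t y μ)) r Xb x) _ (auxLap e g c x) (auxLap e g cb x)
    (X x) (Xb x) _ _ hh2 (hc2 x) (hcb2 x) (hi x) (Ring.mul_inverse_cancel _ (hfbU x)) (hI x)
    (Ring.mul_inverse_cancel _ (hFbU x)) ?_ ?_ ?_ ?_ (heom x) (heomb x) s1 s2 s3 s4 ?_
  · rw [hX, Algebra.smul_def]
  · rw [hXb, Algebra.smul_def]
  · rw [hY, Algebra.smul_def]
  · rw [hYb, Algebra.smul_def]
  · linear_combination (cb x) * k + k2
end

section
/- (Explicit rigid auxiliary field, eq. (3.21).) Under the stated rigid hypotheses, the auxiliary field is given pointwise on ℝ⁴ by F = −f · ( 1 + (1/(4f⁴))·c̄·(□c) − (3/(16f⁸))·c·c̄·(□c)·(□c̄) ), i.e. F(χ) = −f(1 + (χ̄²/(4f⁴))□χ² − (3/(16f⁸))χ²χ̄²(□χ²)(□χ̄²)). -/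
open scoped BigOperators

/-- The flat d'Alembertian `□u = η^{μν} ∂_μ ∂_ν u` with `η = diag(−1,1,1,1)`. -/
noncomputable def box {Λ : Type*} [NormedAddCommGroup Λ] [NormedSpace ℝ Λ]
    (u : (Fin 4 → ℝ) → Λ) : (Fin 4 → ℝ) → Λ :=
  fun x => ∑ μ : Fin 4, (if μ = 0 then (-1 : ℝ) else 1) • pd μ (pd μ u) x

theorem raf_pd_mul {Λ : Type*} [NormedCommRing Λ] [NormedAlgebra ℝ Λ]
    (i : Fin 4) (u v : (Fin 4 → ℝ) → Λ) (hu : Differentiable ℝ u) (hv : Differentiable ℝ v) :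
    pd i (fun x => u x * v x) = fun x => u x * pd i v x + pd i u x * v x := by
  funext x
  have h := ((hu x).hasFDerivAt.mul (hv x).hasFDerivAt).fderiv
  simp only [pd]
  have e : (fun x => u x * v x) = u * v := rfl
  rw [e, h]
  simp [mul_comm]

theorem raf_pd_add {Λ : Type*} [NormedCommRing Λ] [NormedAlgebra ℝ Λ]
    (i : Fin 4) (u v : (Fin 4 → ℝ) → Λ) (hu : Differentiable ℝ u) (hv : Differentiable ℝ v) :
    pd i (fun x => u x + v x) = fun x => pd i u x + pd i v x := by
  funext x
  have h := ((hu x).hasFDerivAt.add (hv x).hasFDerivAt).fderiv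
  simp only [pd]
  have e : (fun x => u x + v x) = u + v := rfl
  rw [e, h]
  simp

theorem raf_pd_const {Λ : Type*} [NormedCommRing Λ] [NormedAlgebra ℝ Λ]
    (i : Fin 4) (a : Λ) : pd i (fun _ : Fin 4 → ℝ => a) = fun _ => 0 := by
  funext x
  simp [pd]

theorem raf_pd_smooth {Λ : Type*} [NormedCommRing Λ] [NormedAlgebra ℝ Λ]
    (i : Fin 4) (u : (Fin 4 → ℝ) → Λ) (hu : ContDiff ℝ (⊤ : ℕ∞) u) :
    ContDiff ℝ (⊤ : ℕ∞) (pd i u) := by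
  unfold pd
  exact (hu.fderiv_right (by simp)).clm_apply contDiff_const

theorem raf_diff {Λ : Type*} [NormedCommRing Λ] [NormedAlgebra ℝ Λ]
    {u : (Fin 4 → ℝ) → Λ} (hu : ContDiff ℝ (⊤ : ℕ∞) u) : Differentiable ℝ u :=
  hu.differentiable (by simp)

/-- inverse is smooth (no completeness needed) -/
theorem raf_inv_cont {Λ E : Type*} [NormedCommRing Λ] [TopologicalSpace E]
    (F G : E → Λ) (hF : Continuous F) (h : ∀ x, F x * G x = 1) : Continuous G := by
  rw [continuous_iff_continuousAt]
  intro x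
  have key : ∀ y, G y - G x = G y * (F x - F y) * G x := by
    intro y
    linear_combination G y * (h x).symm - G x * (h y).symm
  have hb : ∀ y, ‖G y - G x‖ ≤ ‖G y‖ * ‖F x - F y‖ * ‖G x‖ := by
    intro y
    rw [key y]
    exact (norm_mul_le _ _).trans (by gcongr; exact norm_mul_le _ _)
  have ht : Filter.Tendsto (fun y => ‖F x - F y‖ * ‖G x‖) (nhds x) (nhds 0) := by
    have : Continuous (fun y => ‖F x - F y‖ * ‖G x‖) := by fun_prop
    simpa using this.tendsto x
  have hev : ∀ᶠ y in nhds x, ‖G y - G x‖ ≤ 2 * ‖G x‖ * (‖F x - F y‖ * ‖G x‖) := by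
    filter_upwards [ht.eventually (gt_mem_nhds (show (0:ℝ) < 1/2 by norm_num))] with y hy
    have h1 := hb y
    have h2 : ‖G y‖ ≤ ‖G x‖ + ‖G y - G x‖ := by
      simpa using norm_add_le (G x) (G y - G x)
    have h0 : 0 ≤ ‖F x - F y‖ * ‖G x‖ := by positivity
    have h3 : ‖G y‖ ≤ 2 * ‖G x‖ := by nlinarith [norm_nonneg (G y)]
    nlinarith
  rw [ContinuousAt, tendsto_iff_norm_sub_tendsto_zero]
  refine squeeze_zero' (Filter.Eventually.of_forall fun _ => norm_nonneg _) hev ?_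
  simpa using ht.const_mul (2 * ‖G x‖)

theorem raf_inv_fderiv {Λ : Type*} [NormedCommRing Λ] [NormedAlgebra ℝ Λ]
    (F G : (Fin 4 → ℝ) → Λ) (hF : Differentiable ℝ F) (h : ∀ x, F x * G x = 1)
    (x : Fin 4 → ℝ) : HasFDerivAt G (-(G x * G x) • fderiv ℝ F x) x := by
  have hG := raf_inv_cont F G hF.continuous h
  have key : ∀ y, G y - G x = -(G y * G x) * (F y - F x) := by
    intro y
    linear_combination G y * (h x).symm - G x * (h y).symm
  have e : ∀ y, G y = G x + -(G y * G x) * (F y - F x) := by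
    intro y; rw [← key y]; ring
  have hl := (hF x).hasFDerivAt
  rw [hasFDerivAt_iff_isLittleO] at hl ⊢
  have h1 : (fun y => -(G y * G x) * (F y - F x - fderiv ℝ F x (y - x))) =o[nhds x]
      fun y => y - x := by
    have hO : (fun y => -(G y * G x)) =O[nhds x] fun _ => (1:ℝ) :=
      Filter.Tendsto.isBigO_one ℝ
        ((show Continuous fun y => -(G y * G x) by fun_prop).tendsto x)
    have := hO.mul_isLittleO hl.norm_right
    simpa using this
  have h2 : (fun y => (-(G y * G x) + G x * G x) * (fderiv ℝ F x (y - x))) =o[nhds x]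
      fun y => y - x := by
    have ho : (fun y => -(G y * G x) + G x * G x) =o[nhds x] fun _ => (1:ℝ) := by
      rw [Asymptotics.isLittleO_one_iff]
      have := (show Continuous fun y => -(G y * G x) + G x * G x by fun_prop).tendsto x
      simpa using this
    have hO : (fun y => fderiv ℝ F x (y - x)) =O[nhds x] fun y => ‖y - x‖ :=
      ((fderiv ℝ F x).isBigO_sub _ _).norm_right
    have := ho.mul_isBigO hO
    simpa using this
  refine (h1.add h2).congr_left fun y => ?_
  rw [key y]
  simp only [ContinuousLinearMap.smul_apply, smul_eq_mul]
  ring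

theorem raf_inv_smooth {Λ : Type*} [NormedCommRing Λ] [NormedAlgebra ℝ Λ]
    (F G : (Fin 4 → ℝ) → Λ) (hF : ContDiff ℝ (⊤ : ℕ∞) F) (h : ∀ x, F x * G x = 1) :
    ContDiff ℝ (⊤ : ℕ∞) G := by
  have hd := raf_inv_fderiv F G (raf_diff hF) h
  rw [contDiff_infty]
  intro n
  induction n with
  | zero => exact contDiff_zero.2 (raf_inv_cont F G hF.continuous h)
  | succ n ih =>
    push_cast
    rw [contDiff_succ_iff_fderiv]
    refine ⟨fun x => (hd x).differentiableAt, by simp, ?_⟩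
    have : fderiv ℝ G = fun x => -(G x * G x) • fderiv ℝ F x := funext fun x => (hd x).fderiv
    rw [this]
    have e : (fun x => -(G x * G x) • fderiv ℝ F x) = fun x =>
        (ContinuousLinearMap.mul ℝ Λ (-(G x * G x))).comp (fderiv ℝ F x) := by
      funext x
      ext v
      simp
    rw [e]
    refine ContDiff.clm_comp ((ContinuousLinearMap.mul ℝ Λ).contDiff.comp (ih.mul ih).neg)
      (hF.fderiv_right ?_)
    exact_mod_cast le_top

theorem raf_two {Λ : Type*} [NormedCommRing Λ] [NormedAlgebra ℝ Λ] {a : Λ} (h : a + a = 0) :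
    a = 0 := by
  have : (2:ℝ) • a = 0 := by rw [two_smul, h]
  simpa using this

/-- if `H` is a multiple of the nilpotent `b` -/
theorem raf_mult {Λ : Type*} [NormedCommRing Λ] [NormedAlgebra ℝ Λ]
    (b H s : (Fin 4 → ℝ) → Λ) (hb : ContDiff ℝ (⊤ : ℕ∞) b) (hH : ContDiff ℝ (⊤ : ℕ∞) H)
    (hb2 : ∀ x, b x * b x = 0) (hs : ∀ x, H x = b x * s x) (i : Fin 4) (x : Fin 4 → ℝ) :
    b x * pd i H x = 0 ∧ b x * pd i (pd i H) x = pd i (pd i b) x * H x := by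
  have db := raf_diff hb
  have dH := raf_diff hH
  have dpb := raf_diff (raf_pd_smooth i b hb)
  have dpH := raf_diff (raf_pd_smooth i H hH)
  have z : ∀ u v : (Fin 4 → ℝ) → Λ, Differentiable ℝ u → Differentiable ℝ v →
      (∀ y, u y * v y = 0) → ∀ y, u y * pd i v y + pd i u y * v y = 0 := by
    intro u v hu hv h y
    have e : (fun x => u x * v x) = fun _ => 0 := funext h
    have := congrFun (raf_pd_mul i u v hu hv) y
    rw [e, raf_pd_const] at this
    exact this.symm
  have h1 : ∀ y, b y * pd i b y = 0 := fun y => raf_two (by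
    have := z b b db db hb2 y
    rwa [mul_comm (pd i b y)] at this)
  have h2 : ∀ y, pd i b y * H y = 0 := fun y => by
    rw [hs y]; linear_combination s y * h1 y
  have h3 : ∀ y, b y * pd i H y = 0 := fun y => by
    have := z b H db dH (fun y => by rw [hs y]; linear_combination s y * hb2 y) y
    rw [h2, add_zero] at this
    exact this
  refine ⟨h3 x, ?_⟩
  linear_combination z b _ db dpH h3 x - z _ H dpb dH h2 x

/-- `b □(a G) = b □a G + a □b (G + k)` when `G + k` is a multiple of `b`. -/
theorem raf_box {Λ : Type*} [NormedCommRing Λ] [NormedAlgebra ℝ Λ]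
    (a b G s X : (Fin 4 → ℝ) → Λ) (q k : Λ) (ha : ContDiff ℝ (⊤ : ℕ∞) a)
    (hb : ContDiff ℝ (⊤ : ℕ∞) b) (hG : ContDiff ℝ (⊤ : ℕ∞) G)
    (hb2 : ∀ x, b x * b x = 0) (hs : ∀ x, G x + k = b x * s x)
    (hX : ∀ x, X x = q * (a x * G x)) (x : Fin 4 → ℝ) :
    b x * box X x = q * (b x * box a x * G x + a x * box b x * (G x + k)) := by
  have da := raf_diff ha
  have dG := raf_diff hG
  have hpp : ∀ i, b x * pd i (pd i X) x =
      q * (b x * pd i (pd i a) x * G x + a x * pd i (pd i b) x * (G x + k)) := by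
    intro i
    have dpa := raf_diff (raf_pd_smooth i a ha)
    have dpG := raf_diff (raf_pd_smooth i G hG)
    have hm := raf_mult b (fun y => G y + k) s hb (hG.add contDiff_const) hb2 hs i x
    have e : pd i (fun y => G y + k) = pd i G := by
      rw [raf_pd_add i G (fun _ => k) dG (differentiable_const k), raf_pd_const]
      simp
    rw [e] at hm
    have eX : X = fun y => q * (a y * G y) := funext hX
    have d1 : Differentiable ℝ (fun y => a y * G y) := da.mul dG
    have d2 : Differentiable ℝ (fun y => a y * pd i G y) := da.mul dpG
    have d3 : Differentiable ℝ (fun y => pd i a y * G y) := dpa.mul dG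
    have d4 : Differentiable ℝ (fun y => a y * pd i G y + pd i a y * G y) := d2.add d3
    have e1 : pd i X = fun y => q * (a y * pd i G y + pd i a y * G y) := by
      rw [eX, raf_pd_mul i (fun _ => q) _ (differentiable_const q) d1, raf_pd_const,
        raf_pd_mul i a G da dG]
      simp
    have e2 : pd i (pd i X) x = q * ((a x * pd i (pd i G) x + pd i a x * pd i G x) +
        (pd i a x * pd i G x + pd i (pd i a) x * G x)) := by
      rw [e1, raf_pd_mul i (fun _ => q) _ (differentiable_const q) d4, raf_pd_const,
        raf_pd_add i _ _ d2 d3, raf_pd_mul i a _ da dpG, raf_pd_mul i _ G dpa dG]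
      simp
    rw [e2]
    linear_combination (2 * q * pd i a x) * hm.1 + q * a x * hm.2
  simp only [box, Fin.sum_univ_four]
  simp
  linear_combination -hpp 0 + hpp 1 + hpp 2 + hpp 3

theorem raf_alg {Λ : Type*} [CommRing Λ] (c b F Fb G Gb A B f i q S Sb : Λ)
    (hc : c * c = 0) (hb : b * b = 0) (hfi : f * i = 1) (hG : F * G = 1) (hGb : Fb * Gb = 1)
    (hS : F + f = b * S) (hSb : Fb + f = c * Sb)
    (h1 : F + f = q * q * Gb * Gb * (b * A * G + c * B * (G + i)))
    (h2 : Fb + f = q * q * G * G * (c * B * Gb + b * A * (Gb + i))) :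
    F = -f * (1 + q ^ 2 * i ^ 4 * (b * A) - 3 * q ^ 4 * i ^ 8 * (c * b * A * B)) := by
  have bG : b * G = -i * b := by
    have : b * (F + f) = 0 := by rw [hS]; linear_combination S * hb
    linear_combination i * G * this - i * b * hG - b * G * hfi
  have cGb : c * Gb = -i * c := by
    have : c * (Fb + f) = 0 := by rw [hSb]; linear_combination Sb * hc
    linear_combination i * Gb * this - i * c * hGb - c * Gb * hfi
  have gi : G + i = -i ^ 2 * (F + f) := by
    have : (F + f) * G = -i * (F + f) := by rw [hS]; linear_combination S * bG
    linear_combination i * this - i * hG - G * hfi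
  have gbi : Gb + i = -i ^ 2 * (Fb + f) := by
    have : (Fb + f) * Gb = -i * (Fb + f) := by rw [hSb]; linear_combination Sb * cGb
    linear_combination i * this - i * hGb - Gb * hfi
  have cGb2 : c * Gb * Gb = i ^ 2 * c := by linear_combination (Gb - i) * cGb
  have bG2 : b * G * G = i ^ 2 * b := by linear_combination (G - i) * bG
  have cD : c * (F + f) = -q ^ 2 * i ^ 3 * (c * b * A) := by
    rw [h1]
    linear_combination q * q * Gb * Gb * B * (G + i) * hc + q * q * b * A * G * cGb2
      + q * q * i ^ 2 * c * A * bG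
  have bD : b * (Fb + f) = -q ^ 2 * i ^ 3 * (c * b * B) := by
    rw [h2]
    linear_combination q * q * G * G * A * (Gb + i) * hb + q * q * c * B * Gb * bG2
      + q * q * i ^ 2 * b * B * cGb
  have bGb : b * Gb = -i * b + q ^ 2 * i ^ 5 * (c * b * B) := by
    linear_combination b * gbi - i ^ 2 * bD
  have bGb2 : b * Gb * Gb = i ^ 2 * b - 2 * q ^ 2 * i ^ 6 * (c * b * B) := by
    linear_combination (Gb - i) * bGb + q ^ 2 * i ^ 5 * b * B * cGb
  have h3 : F + f = -q ^ 2 * i * A * (i ^ 2 * b - 2 * q ^ 2 * i ^ 6 * (c * b * B))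
      + q ^ 4 * i ^ 7 * (c * b * A * B) := by
    rw [gi] at h1
    linear_combination h1 + q ^ 2 * A * Gb * Gb * bG - q ^ 2 * i * A * bGb2
      - q ^ 2 * i ^ 2 * B * (F + f) * cGb2 - q ^ 2 * i ^ 4 * B * cD
  linear_combination h3 + (q ^ 2 * i ^ 3 * (b * A) - 3 * q ^ 4 * i ^ 7 * (c * b * A * B)) * hfi

/-- **Eq. (3.21).** Explicit rigid auxiliary field:
`F = −f (1 + (χ̄²/(4f⁴)) □χ² − (3/(16f⁸)) χ² χ̄² (□χ²)(□χ̄²))`. -/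
theorem rigid_auxiliary_field
    {Λ : Type*} [NormedCommRing Λ] [NormedAlgebra ℝ Λ]
    (f : ℝ) (hf0 : f ≠ 0)
    (c cb F Fb : (Fin 4 → ℝ) → Λ)
    (hc : ContDiff ℝ (⊤ : ℕ∞) c) (hcb : ContDiff ℝ (⊤ : ℕ∞) cb)
    (hF : ContDiff ℝ (⊤ : ℕ∞) F) (hFb : ContDiff ℝ (⊤ : ℕ∞) Fb)
    -- nilpotency of the fermion bilinears χ², χ̄²
    (hc2 : ∀ x, c x * c x = 0) (hcb2 : ∀ x, cb x * cb x = 0)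
    -- invertibility of the auxiliary fields
    (hFU : ∀ x, IsUnit (F x)) (hFbU : ∀ x, IsUnit (Fb x))
    -- the constrained scalars X = χ²/(2F), X̄ = χ̄²/(2F̄)
    (X Xb : (Fin 4 → ℝ) → Λ)
    (hX : ∀ x, X x = (2 : ℝ)⁻¹ • (c x * Ring.inverse (F x)))
    (hXb : ∀ x, Xb x = (2 : ℝ)⁻¹ • (cb x * Ring.inverse (Fb x)))
    -- the auxiliary-field equations of motion:
    -- F + f = X̄ F̄⁻¹ (□X) and F̄ + f = X F⁻¹ (□X̄)
    (heom : ∀ x, F x + algebraMap ℝ Λ f = Xb x * Ring.inverse (Fb x) * box X x)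
    (heomb : ∀ x, Fb x + algebraMap ℝ Λ f = X x * Ring.inverse (F x) * box Xb x)
    :
    ∀ x, F x = (-f) • ((1 : Λ) + (4 * f ^ 4)⁻¹ • (cb x * box c x)
      - (3 / (16 * f ^ 8)) • (c x * cb x * box c x * box cb x)) := by
  have iF : ∀ x, F x * Ring.inverse (F x) = 1 := fun x => Ring.mul_inverse_cancel _ (hFU x)
  have iFb : ∀ x, Fb x * Ring.inverse (Fb x) = 1 := fun x => Ring.mul_inverse_cancel _ (hFbU x)
  have sG := raf_inv_smooth F _ hF iF
  have sGb := raf_inv_smooth Fb _ hFb iFb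
  have hfi : algebraMap ℝ Λ f * algebraMap ℝ Λ f⁻¹ = 1 := by
    rw [← map_mul, mul_inv_cancel₀ hf0, map_one]
  simp only [Algebra.smul_def] at hX hXb ⊢
  generalize hG : (fun x => Ring.inverse (F x)) = G at sG
  generalize hGb : (fun x => Ring.inverse (Fb x)) = Gb at sGb
  have hG' : ∀ x, Ring.inverse (F x) = G x := fun x => congrFun hG x
  have hGb' : ∀ x, Ring.inverse (Fb x) = Gb x := fun x => congrFun hGb x
  simp only [hG', hGb'] at hX hXb iF iFb heom heomb
  have r1 : (4 * f ^ 4)⁻¹ = (2:ℝ)⁻¹ ^ 2 * f⁻¹ ^ 4 := by field_simp; norm_num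
  have r2 : 3 / (16 * f ^ 8) = 3 * (2:ℝ)⁻¹ ^ 4 * f⁻¹ ^ 8 := by field_simp; norm_num
  rw [r1, r2]
  simp only [map_mul, map_pow, map_neg, map_ofNat]
  generalize algebraMap ℝ Λ f = p at *
  generalize algebraMap ℝ Λ f⁻¹ = k at *
  generalize algebraMap ℝ Λ (2:ℝ)⁻¹ = q at *
  have hS : ∀ x, F x + p = cb x * (q * Gb x * Gb x * box X x) := fun x => by
    rw [heom x, hXb x]; ring
  have hSb : ∀ x, Fb x + p = c x * (q * G x * G x * box Xb x) := fun x => by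
    rw [heomb x, hX x]; ring
  have hs : ∀ x, G x + k = cb x * (k * G x * (q * Gb x * Gb x * box X x)) := fun x => by
    linear_combination k * G x * hS x - k * iF x - G x * hfi
  have hsb : ∀ x, Gb x + k = c x * (k * Gb x * (q * G x * G x * box Xb x)) := fun x => by
    linear_combination k * Gb x * hSb x - k * iFb x - Gb x * hfi
  intro x
  have b1 := raf_box c cb G _ X q k hc hcb sG hcb2 hs hX x
  have b2 := raf_box cb c Gb _ Xb q k hcb hc sGb hc2 hsb hXb x
  refine raf_alg (c x) (cb x) (F x) (Fb x) (G x) (Gb x) (box c x) (box cb x) p k q _ _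
    (hc2 x) (hcb2 x) hfi (iF x) (iFb x) (hS x) (hSb x) ?_ ?_
  · linear_combination hS x + q * Gb x * Gb x * b1
  · linear_combination hSb x + q * G x * G x * b2
end

section
/- (Eqs. (4.8a)–(4.8b): structure of the solution.) Under the stated hypotheses, there exist C^∞ functions h, k : ℝ⁴ → Λ such that pointwise on ℝ⁴: F + f = c̄·h and X − Y = c·c̄·k. In particular F = −f + O(χ̄²) and X = −χ²/(2f) + O(χ²χ̄²). -/
open scoped BigOperators

theorem aux_hasFDerivAt {Λ : Type*} [NormedCommRing Λ] [NormedAlgebra ℝ Λ]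
    {F : (Fin 4 → ℝ) → Λ} (hF : Differentiable ℝ F) (hU : ∀ x, IsUnit (F x)) (x : Fin 4 → ℝ) :
    HasFDerivAt (fun y => Ring.inverse (F y))
      ((ContinuousLinearMap.mul ℝ Λ (-(Ring.inverse (F x) * Ring.inverse (F x)))).comp (fderiv ℝ F x)) x := by
  have hinv : ∀ y, F y * Ring.inverse (F y) = 1 := fun y => Ring.mul_inverse_cancel _ (hU y)
  set G : (Fin 4 → ℝ) → Λ := fun y => Ring.inverse (F y) with hG
  have hid : ∀ y, G y - G x = -(G y * (F y - F x) * G x) := by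
    intro y
    have h1 := hinv x
    have h2 := hinv y
    linear_combination G x * h2 - G y * h1
  have hcF : Filter.Tendsto (fun y => ‖F y - F x‖) (nhds x) (nhds 0) := by
    have := ((hF x).continuousAt.sub (continuousAt_const (y := F x))).norm
    simpa [ContinuousAt] using this
  have hbd : ∀ᶠ y in nhds x, ‖G y‖ ≤ 2 * ‖G x‖ := by
    have h0 : Filter.Tendsto (fun y => ‖F y - F x‖ * ‖G x‖) (nhds x) (nhds 0) := by
      simpa using hcF.mul_const ‖G x‖
    filter_upwards [h0.eventually (gt_mem_nhds (show (0 : ℝ) < 1 / 2 by norm_num))] with y hy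
    have h3 : ‖G y - G x‖ ≤ ‖G y‖ * (‖F y - F x‖ * ‖G x‖) := by
      rw [hid y, norm_neg, mul_assoc]
      exact (norm_mul_le _ _).trans (mul_le_mul_of_nonneg_left (norm_mul_le _ _) (norm_nonneg _))
    have h4 : ‖G y‖ ≤ ‖G y - G x‖ + ‖G x‖ := by
      simpa using norm_add_le (G y - G x) (G x)
    nlinarith [norm_nonneg (G y)]
  have hGO : G =O[nhds x] (fun _ => (1 : ℝ)) := by
    refine Asymptotics.IsBigO.of_bound (2 * ‖G x‖) ?_
    simpa using hbd
  have hd := (hF x).hasFDerivAt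
  have hFO : (fun y => F y - F x) =O[nhds x] (fun y => y - x) := hd.isBigO_sub
  have hFo1 : (fun y => F y - F x) =o[nhds x] (fun _ => (1 : ℝ)) := by
    rw [Asymptotics.isLittleO_one_iff]
    exact tendsto_zero_iff_norm_tendsto_zero.2 hcF
  rw [hasFDerivAt_iff_isLittleO]
  have e1 : (fun y => G y * G x * G x * ((F y - F x) * (F y - F x)))
      =o[nhds x] (fun y => y - x) := by
    have hb : (fun y => G y * G x * G x) =O[nhds x] (fun _ => (1 : ℝ)) := by
      have hk := Asymptotics.isBigO_const_const (G x) (one_ne_zero (α := ℝ)) (nhds x)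
      simpa using (hGO.mul hk).mul hk
    have h5 := hb.mul_isLittleO (hFo1.mul_isBigO hFO.norm_right)
    simpa using h5.norm_right
  have e2 : (fun y => (G x * G x) * (F y - F x - fderiv ℝ F x (y - x)))
      =o[nhds x] (fun y => y - x) :=
    (hasFDerivAt_iff_isLittleO.1 hd).const_mul_left _
  refine (e1.sub e2).congr_left fun y => ?_
  have h1 := hinv x
  have h2 := hinv y
  have h3 := hid y
  simp only [ContinuousLinearMap.comp_apply, ContinuousLinearMap.mul_apply']
  change _ = G y - G x - -(G x * G x) * _
  have h6 : G y - G x = -(G x * G x * (F y - F x)) + G y * G x * G x * ((F y - F x) * (F y - F x)) := by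
    linear_combination h3 - (F y - F x) * G x * h3
  rw [h6]; ring

theorem aux_contDiff_s14 {Λ : Type*} [NormedCommRing Λ] [NormedAlgebra ℝ Λ]
    {F : (Fin 4 → ℝ) → Λ} (hF : ContDiff ℝ (⊤ : ℕ∞) F) (hU : ∀ x, IsUnit (F x)) :
    ContDiff ℝ (⊤ : ℕ∞) (fun y => Ring.inverse (F y)) := by
  have hd := aux_hasFDerivAt (hF.differentiable (by simp)) hU
  have hdiff : Differentiable ℝ (fun y => Ring.inverse (F y)) :=
    fun x => (hd x).differentiableAt
  rw [contDiff_infty]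
  intro n
  induction n with
  | zero => exact contDiff_zero.2 hdiff.continuous
  | succ n ih =>
    have hn : ((n + 1 : ℕ) : WithTop ℕ∞) = (n : WithTop ℕ∞) + 1 := by push_cast; rfl
    rw [hn, contDiff_succ_iff_fderiv]
    refine ⟨hdiff, by simp, ?_⟩
    have : fderiv ℝ (fun y => Ring.inverse (F y)) =
        fun x => ((ContinuousLinearMap.mul ℝ Λ (-(Ring.inverse (F x) * Ring.inverse (F x)))).comp (fderiv ℝ F x)) :=
      funext fun x => (hd x).fderiv
    rw [this]
    have hF' : ContDiff ℝ n (fderiv ℝ F) :=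
      hF.fderiv_right (by exact_mod_cast le_top)
    exact ((ContinuousLinearMap.mul ℝ Λ).contDiff.comp (ih.mul ih).neg).clm_comp hF'

theorem aux_pd {Λ : Type*} [NormedAddCommGroup Λ] [NormedSpace ℝ Λ] (i : Fin 4)
    {u : (Fin 4 → ℝ) → Λ} (hu : ContDiff ℝ (⊤ : ℕ∞) u) : ContDiff ℝ (⊤ : ℕ∞) (pd i u) := by
  have : ContDiff ℝ (⊤ : ℕ∞) (fderiv ℝ u) := hu.fderiv_right (by simp)
  exact this.clm_apply contDiff_const

theorem aux_Aop {Λ : Type*} [NormedCommRing Λ] [NormedAlgebra ℂ Λ]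
    {e : (Fin 4 → ℝ) → ℝ} {g : (Fin 4 → ℝ) → Fin 4 → Fin 4 → ℝ}
    {t : (Fin 4 → ℝ) → Fin 4 → ℝ} {r : (Fin 4 → ℝ) → ℝ} {u : (Fin 4 → ℝ) → Λ}
    (ht : ContDiff ℝ (⊤ : ℕ∞) t) (hr : ContDiff ℝ (⊤ : ℕ∞) r)
    (hg : ContDiff ℝ (⊤ : ℕ∞) g)
    (he : ContDiff ℝ (⊤ : ℕ∞) e) (he0 : ∀ x, e x ≠ 0) (hu : ContDiff ℝ (⊤ : ℕ∞) u) :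
    ContDiff ℝ (⊤ : ℕ∞) (Aop e g t r u) := by
  have hei : ContDiff ℝ (⊤ : ℕ∞) (fun x => (e x)⁻¹) := he.inv he0
  have hgg : ∀ μ ν, ContDiff ℝ (⊤ : ℕ∞) (fun x => g x μ ν) := fun μ ν =>
    contDiff_pi.1 (contDiff_pi.1 hg μ) ν
  have htt : ∀ μ, ContDiff ℝ (⊤ : ℕ∞) (fun x => t x μ) := contDiff_pi.1 ht
  have h1 : ∀ μ, ContDiff ℝ (⊤ : ℕ∞)
      (pd μ (fun y => e y • ∑ ν : Fin 4, g y μ ν • pd ν u y)) := fun μ =>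
    aux_pd μ (he.smul (ContDiff.sum fun ν _ => (hgg μ ν).smul (aux_pd ν hu)))
  have h2 : ∀ μ : Fin 4, ContDiff ℝ (⊤ : ℕ∞)
      (fun x => fderiv ℝ (fun y => e y * t y μ) x (Pi.single μ 1)) := fun μ =>
    aux_pd μ (he.mul (htt μ))
  unfold Aop
  refine (((hei.smul (ContDiff.sum fun μ _ => h1 μ)).add
    (ContDiff.const_smul _ (ContDiff.sum fun μ _ => (htt μ).smul (aux_pd μ hu)))).add
    (((contDiff_const.mul hei).mul (ContDiff.sum fun μ _ => h2 μ)).smul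
      (ContDiff.const_smul _ hu))).add (hr.smul hu)

/-- **Eqs. (4.8a)–(4.8b).** Structure of the solution: there are smooth `h`, `k`
with `F + f = χ̄² h` and `X − Y = χ² χ̄² k`, i.e. `F = −f + O(χ̄²)` and
`X = −χ²/(2f) + O(χ² χ̄²)`. -/
theorem solution_structure
    {Λ : Type*} [NormedCommRing Λ] [NormedAlgebra ℂ Λ]
    (c cb B Bb f fb F Fb : (Fin 4 → ℝ) → Λ)
    (t : (Fin 4 → ℝ) → Fin 4 → ℝ) (r : (Fin 4 → ℝ) → ℝ)
    (g : (Fin 4 → ℝ) → Fin 4 → Fin 4 → ℝ) (e : (Fin 4 → ℝ) → ℝ)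
    -- smoothness of all data
    (hc : ContDiff ℝ (⊤ : ℕ∞) c) (hcb : ContDiff ℝ (⊤ : ℕ∞) cb)
    (hB : ContDiff ℝ (⊤ : ℕ∞) B) (hBb : ContDiff ℝ (⊤ : ℕ∞) Bb)
    (hf : ContDiff ℝ (⊤ : ℕ∞) f) (hfb : ContDiff ℝ (⊤ : ℕ∞) fb)
    (hF : ContDiff ℝ (⊤ : ℕ∞) F) (hFb : ContDiff ℝ (⊤ : ℕ∞) Fb)
    (ht : ContDiff ℝ (⊤ : ℕ∞) t) (hr : ContDiff ℝ (⊤ : ℕ∞) r)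
    (hg : ContDiff ℝ (⊤ : ℕ∞) g) (hgsym : ∀ x μ ν, g x μ ν = g x ν μ)
    (he : ContDiff ℝ (⊤ : ℕ∞) e) (he0 : ∀ x, e x ≠ 0)
    -- nilpotency of the fermion bilinears
    (hc2 : ∀ x, c x * c x = 0) (hcb2 : ∀ x, cb x * cb x = 0)
    -- invertibility
    (hfU : ∀ x, IsUnit (f x)) (hfbU : ∀ x, IsUnit (fb x))
    (hFU : ∀ x, IsUnit (F x)) (hFbU : ∀ x, IsUnit (Fb x))
    -- the constrained scalars X = c/(2F), X̄ = c̄/(2F̄), Y = -c/(2f), Ȳ = -c̄/(2f̄)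
    (X Xb Y Yb : (Fin 4 → ℝ) → Λ)
    (hX : ∀ x, X x = (2 : ℝ)⁻¹ • (c x * Ring.inverse (F x)))
    (hXb : ∀ x, Xb x = (2 : ℝ)⁻¹ • (cb x * Ring.inverse (Fb x)))
    (hY : ∀ x, Y x = -((2 : ℝ)⁻¹ • (c x * Ring.inverse (f x))))
    (hYb : ∀ x, Yb x = -((2 : ℝ)⁻¹ • (cb x * Ring.inverse (fb x))))
    -- the auxiliary-field equations of motion (4.7):
    -- F + f = X̄ F̄⁻¹ (A X + B) and F̄ + f̄ = X F⁻¹ (Ā X̄ + B̄)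
    (heom : ∀ x, F x + f x = Xb x * Ring.inverse (Fb x) * (Aop e g t r X x + B x))
    (heomb : ∀ x, Fb x + fb x =
      X x * Ring.inverse (F x) * (Aop e g (fun y μ => -(t y μ)) r Xb x + Bb x))
    :
    ∃ h k : (Fin 4 → ℝ) → Λ, ContDiff ℝ (⊤ : ℕ∞) h ∧ ContDiff ℝ (⊤ : ℕ∞) k ∧
      (∀ x, F x + f x = cb x * h x) ∧
      (∀ x, X x - Y x = c x * cb x * k x) := by
  have hFi := aux_contDiff_s14 hF hFU
  have hFbi := aux_contDiff_s14 hFb hFbU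
  have hfi := aux_contDiff_s14 hf hfU
  have hXs : ContDiff ℝ (⊤ : ℕ∞) X := by
    rw [funext hX]
    exact (hc.mul hFi).const_smul _
  have hA := aux_Aop ht hr hg he he0 hXs
  have key : ∀ x, F x + f x = cb x * ((2 : ℝ)⁻¹ • (Ring.inverse (Fb x) * Ring.inverse (Fb x) *
      (Aop e g t r X x + B x))) := by
    intro x
    rw [heom x, hXb x]
    simp only [smul_mul_assoc, mul_smul_comm]
    congr 1
    ring
  have hh := (((hFbi.mul hFbi).mul (hA.add hB)).const_smul (2 : ℝ)⁻¹)
  refine ⟨_, fun x => (2 : ℝ)⁻¹ • (Ring.inverse (F x) * Ring.inverse (f x) *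
    ((2 : ℝ)⁻¹ • (Ring.inverse (Fb x) * Ring.inverse (Fb x) * (Aop e g t r X x + B x)))), hh,
    ((hFi.mul hfi).mul hh).const_smul _, key, ?_⟩
  intro x
  have k1 := key x
  have h1 := Ring.mul_inverse_cancel _ (hFU x)
  have h2 := Ring.mul_inverse_cancel _ (hfU x)
  rw [hX, hY, sub_neg_eq_add, ← smul_add, mul_smul_comm]
  congr 1
  generalize (2 : ℝ)⁻¹ • (Ring.inverse (Fb x) * Ring.inverse (Fb x) *
      (Aop e g t r X x + B x)) = H at k1 ⊢
  linear_combination c x * Ring.inverse (F x) * Ring.inverse (f x) * k1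
    - c x * Ring.inverse (f x) * h1 - c x * Ring.inverse (F x) * h2
end
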